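/- There exists a constant C > 0, depending only on α and β, with the following property. Let (u_k, λ_k, f_k) be a sequence of real Dirichlet quasimode data on the stadium S with ‖u_k‖_{L²(S)} = 1 for all k, λ_k → ∞, and λ_k² ‖f_k‖_{L²(S)} → 0 (an o(λ^{−2}) quasimode; in particular this holds for a sequence of Dirichlet eigenfunctions, for which f_k = 0). Then for all sufficiently large k, ‖u_k‖_{L²(W)} ≥ C λ_k^{−2}, where ‖u_k‖_{L²(W)} is the L² norm of u_k over the wings W. -/

import Mathlib

open MeasureTheory Real Set Filter

noncomputable section

/-- Partial derivative in the first (x) variable. -/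
def pdx (u : ℝ × ℝ → ℝ) (p : ℝ × ℝ) : ℝ := deriv (fun t => u (t, p.2)) p.1

/-- Partial derivative in the second (y) variable. -/
def pdy (u : ℝ × ℝ → ℝ) (p : ℝ × ℝ) : ℝ := deriv (fun t => u (p.1, t)) p.2

/-- The positive Laplacian `Δu = -u_xx - u_yy`. -/
def lap (u : ℝ × ℝ → ℝ) (p : ℝ × ℝ) : ℝ := -(pdx (pdx u) p) - (pdy (pdy u) p)

/-- The central rectangle `R = [-α,α] × [-β,β]`. -/
def Rect (α β : ℝ) : Set (ℝ × ℝ) := Icc (-α) α ×ˢ Icc (-β) β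

/-- The wings `W = W₊ ∪ W₋`, two half-discs of radius β centered at `(±α, 0)`. -/
def Wings (α β : ℝ) : Set (ℝ × ℝ) :=
  {p | (p.1 - α) ^ 2 + p.2 ^ 2 ≤ β ^ 2 ∧ α ≤ p.1} ∪
  {p | (p.1 + α) ^ 2 + p.2 ^ 2 ≤ β ^ 2 ∧ p.1 ≤ -α}

/-- The Bunimovich stadium `S = R ∪ W`. -/
def Stadium (α β : ℝ) : Set (ℝ × ℝ) := Rect α β ∪ Wings α β

/-- The boundary `∂S`: two horizontal segments and two semicircles. -/
def StadiumBoundary (α β : ℝ) : Set (ℝ × ℝ) :=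
  {p | |p.1| ≤ α ∧ (p.2 = β ∨ p.2 = -β)} ∪
  {p | (|p.1| - α) ^ 2 + p.2 ^ 2 = β ^ 2 ∧ α ≤ |p.1|}

/-- Boundary integral `∫_{∂S} g dl` of an integrand `g` depending on the boundary point
and the outward unit normal at that point. -/
def bdryInt (α β : ℝ) (g : ℝ × ℝ → ℝ × ℝ → ℝ) : ℝ :=
  (∫ x in (-α)..α, (g (x, β) (0, 1) + g (x, -β) (0, -1))) +
  β * ∫ θ in (-(π / 2))..(π / 2),
    (g (α + β * cos θ, β * sin θ) (cos θ, sin θ) +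
     g (-(α + β * cos θ), β * sin θ) (-cos θ, sin θ))

/-- Boundary integral `∫_{∂S ∩ W} g dl` over the two semicircles only. -/
def bdryIntW (α β : ℝ) (g : ℝ × ℝ → ℝ × ℝ → ℝ) : ℝ :=
  β * ∫ θ in (-(π / 2))..(π / 2),
    (g (α + β * cos θ, β * sin θ) (cos θ, sin θ) +
     g (-(α + β * cos θ), β * sin θ) (-cos θ, sin θ))

/-- The normal derivative `∂_N u = n₁ ∂_x u + n₂ ∂_y u` at a boundary point `p`
with outward unit normal `n`. -/
def nderiv (u : ℝ × ℝ → ℝ) (p n : ℝ × ℝ) : ℝ := n.1 * pdx u p + n.2 * pdy u p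

/-- A real Dirichlet quasimode datum `(u, λ, f)` on the stadium: `λ > 0`, `u` smooth on a
neighborhood of `S`, `u = 0` on `∂S`, and `(Δ - λ²) u = f` on `S`. -/
structure QMDatum (α β : ℝ) where
  u : ℝ × ℝ → ℝ
  lam : ℝ
  f : ℝ × ℝ → ℝ
  lam_pos : 0 < lam
  smooth : ∃ V : Set (ℝ × ℝ), IsOpen V ∧ Stadium α β ⊆ V ∧ ContDiffOn ℝ (⊤ : ℕ∞) u V
  dirichlet : ∀ p ∈ StadiumBoundary α β, u p = 0
  eqn : ∀ p ∈ Stadium α β, lap u p - lam ^ 2 * u p = f p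

/-!
Write `l` for the frequency, `f = Δu - l²u`, and norms over the stadium unless indicated. Since `u`
vanishes on the boundary, `‖u‖` is bounded by `‖∂ₓu‖` (Poincaré in the `x` direction). The
commutator of `Δ - l²` with `x ∂ₓ` expresses `‖∂ₓu‖²`, up to terms in `f`, as the integral of
`x n₁ (∂ₙu)²` over the boundary, and this integrand is supported on the two semicircles because
`n₁ = 0` on the flat sides. On each wing, the Rellich identity for the radial field about the
centre of the half-disc, multiplied by the distance to the flat side, turns the flux into integrals
over that wing with no contribution from the flat side. After integrations by parts each of these
has a factor `u` or `f`, or the good sign. The remaining second derivative is controlled by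
convexity: `∫ det D²u ≥ 0`, whence `2 ‖∂ₓ∂ᵧu‖ ≤ ‖Δu‖`. Altogether `‖u‖² ≤ K ‖u‖ (l² ‖u‖_W + l ‖f‖)`.
-/

section PartialDerivatives

variable {u v : ℝ × ℝ → ℝ} {m n : WithTop ℕ∞}

lemma hasDerivAt_pdx (hu : Differentiable ℝ u) (x y : ℝ) :
    HasDerivAt (fun t => u (t, y)) (pdx u (x, y)) x :=
  DifferentiableAt.hasDerivAt (by fun_prop)

lemma hasDerivAt_pdy (hu : Differentiable ℝ u) (x y : ℝ) :
    HasDerivAt (fun t => u (x, t)) (pdy u (x, y)) y :=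
  DifferentiableAt.hasDerivAt (by fun_prop)

lemma pdx_eq_fderiv (hu : Differentiable ℝ u) : pdx u = fun p => fderiv ℝ u p (1, 0) := by
  ext ⟨x, y⟩
  exact (hasDerivAt_pdx hu x y).unique
    ((hu (x, y)).hasFDerivAt.comp_hasDerivAt x ((hasDerivAt_id x).prodMk (hasDerivAt_const x y)))

lemma pdy_eq_fderiv (hu : Differentiable ℝ u) : pdy u = fun p => fderiv ℝ u p (0, 1) := by
  ext ⟨x, y⟩
  exact (hasDerivAt_pdy hu x y).unique
    ((hu (x, y)).hasFDerivAt.comp_hasDerivAt y ((hasDerivAt_const y x).prodMk (hasDerivAt_id y)))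

lemma fderiv_eq_pdx_pdy (hu : Differentiable ℝ u) (p v : ℝ × ℝ) :
    fderiv ℝ u p v = v.1 * pdx u p + v.2 * pdy u p := by
  rw [pdx_eq_fderiv hu, pdy_eq_fderiv hu, ← smul_eq_mul, ← smul_eq_mul, ← map_smul, ← map_smul,
    ← map_add]
  simp

lemma contDiff_pdx (hu : ContDiff ℝ n u) (hmn : m + 1 ≤ n) : ContDiff ℝ m (pdx u) := by
  rw [pdx_eq_fderiv (hu.differentiable fun h => by simp [h] at hmn)]
  exact (hu.fderiv_right hmn).clm_apply contDiff_const

lemma contDiff_pdy (hu : ContDiff ℝ n u) (hmn : m + 1 ≤ n) : ContDiff ℝ m (pdy u) := by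
  rw [pdy_eq_fderiv (hu.differentiable fun h => by simp [h] at hmn)]
  exact (hu.fderiv_right hmn).clm_apply contDiff_const

lemma continuous_pdx (hu : ContDiff ℝ 1 u) : Continuous (pdx u) :=
  (contDiff_pdx (m := 0) hu (by simp)).continuous

lemma continuous_pdy (hu : ContDiff ℝ 1 u) : Continuous (pdy u) :=
  (contDiff_pdy (m := 0) hu (by simp)).continuous

lemma pdx_pdy_comm (hu : ContDiff ℝ 2 u) : pdx (pdy u) = pdy (pdx u) := by
  have hu' : Differentiable ℝ u := hu.differentiable two_ne_zero
  have hfd : Differentiable ℝ (fderiv ℝ u) :=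
    (hu.fderiv_right (m := 1) le_rfl).differentiable one_ne_zero
  have hsymm : ∀ p, IsSymmSndFDerivAt ℝ u p := fun p =>
    hu.contDiffAt.isSymmSndFDerivAt (by simp)
  rw [pdx_eq_fderiv ((contDiff_pdy hu le_rfl).differentiable one_ne_zero),
    pdy_eq_fderiv ((contDiff_pdx hu le_rfl).differentiable one_ne_zero),
    pdx_eq_fderiv hu', pdy_eq_fderiv hu']
  ext p
  rw [fderiv_clm_apply (hfd p) (by fun_prop), fderiv_clm_apply (hfd p) (by fun_prop)]
  simpa using hsymm p (1, 0) (0, 1)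

lemma pdx_const (c : ℝ) (p : ℝ × ℝ) : pdx (fun _ => c) p = 0 := by simp [pdx]

lemma pdy_const (c : ℝ) (p : ℝ × ℝ) : pdy (fun _ => c) p = 0 := by simp [pdy]

lemma pdx_fst (p : ℝ × ℝ) : pdx Prod.fst p = 1 := by simp [pdx]

lemma pdy_fst (p : ℝ × ℝ) : pdy Prod.fst p = 0 := by simp [pdy]

lemma pdx_snd (p : ℝ × ℝ) : pdx Prod.snd p = 0 := by simp [pdx]

lemma pdy_snd (p : ℝ × ℝ) : pdy Prod.snd p = 1 := by simp [pdy]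

lemma pdx_add (hu : Differentiable ℝ u) (hv : Differentiable ℝ v) (p : ℝ × ℝ) :
    pdx (fun q => u q + v q) p = pdx u p + pdx v p :=
  deriv_fun_add (by fun_prop) (by fun_prop)

lemma pdy_add (hu : Differentiable ℝ u) (hv : Differentiable ℝ v) (p : ℝ × ℝ) :
    pdy (fun q => u q + v q) p = pdy u p + pdy v p :=
  deriv_fun_add (by fun_prop) (by fun_prop)

lemma pdx_sub (hu : Differentiable ℝ u) (hv : Differentiable ℝ v) (p : ℝ × ℝ) :
    pdx (fun q => u q - v q) p = pdx u p - pdx v p :=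
  deriv_fun_sub (by fun_prop) (by fun_prop)

lemma pdy_sub (hu : Differentiable ℝ u) (hv : Differentiable ℝ v) (p : ℝ × ℝ) :
    pdy (fun q => u q - v q) p = pdy u p - pdy v p :=
  deriv_fun_sub (by fun_prop) (by fun_prop)

lemma pdx_mul (hu : Differentiable ℝ u) (hv : Differentiable ℝ v) (p : ℝ × ℝ) :
    pdx (fun q => u q * v q) p = pdx u p * v p + u p * pdx v p :=
  ((hasDerivAt_pdx hu p.1 p.2).mul (hasDerivAt_pdx hv p.1 p.2)).deriv

lemma pdy_mul (hu : Differentiable ℝ u) (hv : Differentiable ℝ v) (p : ℝ × ℝ) :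
    pdy (fun q => u q * v q) p = pdy u p * v p + u p * pdy v p :=
  ((hasDerivAt_pdy hu p.1 p.2).mul (hasDerivAt_pdy hv p.1 p.2)).deriv

lemma pdx_neg (u : ℝ × ℝ → ℝ) (p : ℝ × ℝ) : pdx (fun q => -u q) p = -pdx u p :=
  deriv.fun_neg

lemma pdx_eventuallyEq {p : ℝ × ℝ} (h : u =ᶠ[nhds p] v) : pdx u =ᶠ[nhds p] pdx v := by
  filter_upwards [h.eventuallyEq_nhds] with q hq
  exact (hq.comp_tendsto
    (show Continuous fun t : ℝ => (t, q.2) by fun_prop).continuousAt).deriv_eq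

lemma pdy_eventuallyEq {p : ℝ × ℝ} (h : u =ᶠ[nhds p] v) : pdy u =ᶠ[nhds p] pdy v := by
  filter_upwards [h.eventuallyEq_nhds] with q hq
  exact (hq.comp_tendsto
    (show Continuous fun t : ℝ => (q.1, t) by fun_prop).continuousAt).deriv_eq

lemma lap_eq_of_eventuallyEq {p : ℝ × ℝ} (h : u =ᶠ[nhds p] v) : lap u p = lap v p := by
  rw [lap, lap, (pdx_eventuallyEq (pdx_eventuallyEq h)).eq_of_nhds,
    (pdy_eventuallyEq (pdy_eventuallyEq h)).eq_of_nhds]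

lemma contDiff_lap (hu : ContDiff ℝ n u) (hmn : m + 2 ≤ n) : ContDiff ℝ m (lap u) := by
  have hmn' : m + 1 + 1 ≤ n := by rwa [add_assoc, one_add_one_eq_two]
  exact (contDiff_pdx (contDiff_pdx hu hmn') le_rfl).neg.sub
    (contDiff_pdy (contDiff_pdy hu hmn') le_rfl)

end PartialDerivatives

section Reflection

/-- The reflection `(x, y) ↦ (-x, y)`, which exchanges the two wings of the stadium. -/
def reflectX (p : ℝ × ℝ) : ℝ × ℝ := (-p.1, p.2)

lemma reflectX_reflectX (p : ℝ × ℝ) : reflectX (reflectX p) = p := by simp [reflectX]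

lemma contDiff_reflectX {n : WithTop ℕ∞} : ContDiff ℝ n reflectX :=
  contDiff_fst.neg.prodMk contDiff_snd

lemma measurePreserving_reflectX : MeasurePreserving reflectX :=
  (Measure.measurePreserving_neg volume).prod (MeasurePreserving.id volume)

lemma measurableEmbedding_reflectX : MeasurableEmbedding reflectX :=
  ((Homeomorph.neg ℝ).prodCongr (Homeomorph.refl ℝ)).measurableEmbedding

lemma pdx_comp_reflectX (u : ℝ × ℝ → ℝ) :
    pdx (u ∘ reflectX) = fun p => -pdx u (reflectX p) := by
  ext p
  exact deriv_comp_neg (fun t => u (t, p.2)) p.1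

lemma pdy_comp_reflectX (u : ℝ × ℝ → ℝ) : pdy (u ∘ reflectX) = pdy u ∘ reflectX := rfl

lemma lap_comp_reflectX (u : ℝ × ℝ → ℝ) : lap (u ∘ reflectX) = lap u ∘ reflectX := by
  ext p
  have hxx : pdx (fun q => pdx u (reflectX q)) p = -pdx (pdx u) (reflectX p) :=
    congrFun (pdx_comp_reflectX (pdx u)) p
  simp only [lap, pdx_comp_reflectX, pdy_comp_reflectX, pdx_neg, hxx, neg_neg, Function.comp]

lemma setIntegral_comp_reflectX (g : ℝ × ℝ → ℝ) (D : Set (ℝ × ℝ)) :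
    ∫ p in reflectX ⁻¹' D, g (reflectX p) = ∫ p in D, g p :=
  measurePreserving_reflectX.setIntegral_preimage_emb measurableEmbedding_reflectX g D

end Reflection

section L2

lemma abs_integral_mul_mul_le {X : Type*} [MeasurableSpace X] {μ : Measure X} {m g h : X → ℝ}
    {M : ℝ} (hM : 0 ≤ M) (hm : ∀ᵐ x ∂μ, |m x| ≤ M) (hg : MemLp g 2 μ) (hh : MemLp h 2 μ) :
    |∫ x, m x * (g x * h x) ∂μ| ≤ M * (√(∫ x, g x ^ 2 ∂μ) * √(∫ x, h x ^ 2 ∂μ)) := by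
  have holder := integral_mul_norm_le_Lp_mul_Lq (f := g) (g := h) (μ := μ)
    Real.HolderConjugate.two_two (by simpa using hg) (by simpa using hh)
  simp only [norm_eq_abs, rpow_two, sq_abs, ← sqrt_eq_rpow] at holder
  calc |∫ x, m x * (g x * h x) ∂μ|
      ≤ ∫ x, M * (|g x| * |h x|) ∂μ := by
        refine (norm_eq_abs _).symm.trans_le <|
          norm_integral_le_of_norm_le ((hg.abs.integrable_mul hh.abs).const_mul M) ?_
        filter_upwards [hm] with x hx
        rw [norm_eq_abs, abs_mul, abs_mul]
        gcongr
    _ ≤ M * (√(∫ x, g x ^ 2 ∂μ) * √(∫ x, h x ^ 2 ∂μ)) := by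
        rw [integral_const_mul]
        gcongr

/-- The `L²` norm of `g` over `D`. -/
def l2norm (D : Set (ℝ × ℝ)) (g : ℝ × ℝ → ℝ) : ℝ := √(∫ p in D, g p ^ 2)

variable {D E : Set (ℝ × ℝ)} {m g h : ℝ × ℝ → ℝ} {M : ℝ}

lemma l2norm_nonneg (D : Set (ℝ × ℝ)) (g : ℝ × ℝ → ℝ) : 0 ≤ l2norm D g := sqrt_nonneg _

lemma sq_l2norm (D : Set (ℝ × ℝ)) (g : ℝ × ℝ → ℝ) : l2norm D g ^ 2 = ∫ p in D, g p ^ 2 :=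
  sq_sqrt (integral_nonneg fun _ => sq_nonneg _)

lemma l2norm_mono (hE : IsCompact E) (hg : Continuous g) (hDE : D ⊆ E) :
    l2norm D g ≤ l2norm E g :=
  sqrt_le_sqrt (setIntegral_mono_set ((hg.pow 2).continuousOn.integrableOn_compact hE)
    (ae_of_all _ fun _ => sq_nonneg _) hDE.eventuallyLE)

lemma l2norm_congr (hD : MeasurableSet D) (hgh : EqOn g h D) :
    l2norm D g = l2norm D h :=
  congrArg sqrt (setIntegral_congr_fun hD fun p hp => by simp only [hgh hp])

lemma l2norm_comp_reflectX (D : Set (ℝ × ℝ)) (g : ℝ × ℝ → ℝ) :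
    l2norm (reflectX ⁻¹' D) (g ∘ reflectX) = l2norm D g :=
  congrArg sqrt (setIntegral_comp_reflectX (fun p => g p ^ 2) D)

lemma abs_setIntegral_mul_mul_le (hD : IsCompact D) (hM : 0 ≤ M) (hm : ∀ p ∈ D, |m p| ≤ M)
    (hg : Continuous g) (hh : Continuous h) :
    |∫ p in D, m p * (g p * h p)| ≤ M * (l2norm D g * l2norm D h) := by
  have memLp : ∀ k : ℝ × ℝ → ℝ, Continuous k → MemLp k 2 (volume.restrict D) := fun k hk =>
    (memLp_two_iff_integrable_sq hk.aestronglyMeasurable).2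
      ((hk.pow 2).continuousOn.integrableOn_compact hD)
  exact abs_integral_mul_mul_le hM (ae_restrict_of_forall_mem hD.measurableSet hm)
    (memLp g hg) (memLp h hh)

lemma abs_setIntegral_mul_le (hD : IsCompact D) (hg : Continuous g) (hh : Continuous h) :
    |∫ p in D, g p * h p| ≤ l2norm D g * l2norm D h := by
  simpa using abs_setIntegral_mul_mul_le (m := fun _ => 1) hD zero_le_one (by simp) hg hh

lemma l2norm_neg (D : Set (ℝ × ℝ)) (g : ℝ × ℝ → ℝ) : l2norm D (fun p => -g p) = l2norm D g := by
  simp only [l2norm, neg_sq]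

lemma l2norm_const_mul (D : Set (ℝ × ℝ)) (c : ℝ) (g : ℝ × ℝ → ℝ) :
    l2norm D (fun p => c * g p) = |c| * l2norm D g := by
  simp only [l2norm, mul_pow, integral_const_mul]
  rw [sqrt_mul (sq_nonneg c), sqrt_sq_eq_abs]

lemma l2norm_add_le (hD : IsCompact D) (hg : Continuous g) (hh : Continuous h) :
    l2norm D (fun p => g p + h p) ≤ l2norm D g + l2norm D h := by
  have hI : ∀ {k : ℝ × ℝ → ℝ}, Continuous k → IntegrableOn k D := fun hk =>
    hk.continuousOn.integrableOn_compact hD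
  refine le_of_sq_le_sq ?_ (add_nonneg (l2norm_nonneg _ _) (l2norm_nonneg _ _))
  calc l2norm D (fun p => g p + h p) ^ 2
      = l2norm D g ^ 2 + 2 * (∫ p in D, g p * h p) + l2norm D h ^ 2 := by
        simp only [sq_l2norm, add_sq, mul_assoc]
        rw [integral_add (hI (by fun_prop)) (hI (by fun_prop)),
          integral_add (hI (by fun_prop)) (hI (by fun_prop)), integral_const_mul]
    _ ≤ l2norm D g ^ 2 + 2 * (l2norm D g * l2norm D h) + l2norm D h ^ 2 := by
        gcongr
        exact (le_abs_self _).trans (abs_setIntegral_mul_le hD hg hh)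
    _ = (l2norm D g + l2norm D h) ^ 2 := by ring

end L2

section HalfDisc

lemma setIntegral_eq_integral_vertical_slices {D : Set (ℝ × ℝ)} {F : ℝ × ℝ → ℝ} {a b : ℝ}
    {l r : ℝ → ℝ} (hD : MeasurableSet D) (hF : IntegrableOn F D) (hab : a ≤ b)
    (hlr : ∀ x ∈ Icc a b, l x ≤ r x)
    (hmem : ∀ x y, (x, y) ∈ D ↔ x ∈ Icc a b ∧ y ∈ Icc (l x) (r x)) :
    ∫ p in D, F p = ∫ x in a..b, ∫ y in (l x)..(r x), F (x, y) := by
  have slice : ∀ x, ∫ y, D.indicator F (x, y) =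
      (Icc a b).indicator (fun x => ∫ y in (l x)..(r x), F (x, y)) x := by
    intro x
    by_cases hx : x ∈ Icc a b
    · rw [indicator_of_mem hx, intervalIntegral.integral_of_le (hlr x hx),
        ← integral_Icc_eq_integral_Ioc, ← integral_indicator measurableSet_Icc]
      congr! 2
      simp only [indicator, hmem, hx, true_and]
    · simp only [indicator, hmem, hx, false_and, if_false, integral_zero]
  rw [← integral_indicator hD, Measure.volume_eq_prod,
    integral_prod _ (hF.integrable_indicator hD)]
  simp_rw [slice]
  rw [integral_indicator measurableSet_Icc, integral_Icc_eq_integral_Ioc,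
    intervalIntegral.integral_of_le hab]

lemma setIntegral_eq_integral_horizontal_slices {D : Set (ℝ × ℝ)} {F : ℝ × ℝ → ℝ} {a b : ℝ}
    {l r : ℝ → ℝ} (hD : MeasurableSet D) (hF : IntegrableOn F D) (hab : a ≤ b)
    (hlr : ∀ y ∈ Icc a b, l y ≤ r y)
    (hmem : ∀ x y, (x, y) ∈ D ↔ y ∈ Icc a b ∧ x ∈ Icc (l y) (r y)) :
    ∫ p in D, F p = ∫ y in a..b, ∫ x in (l y)..(r y), F (x, y) := by
  have hswap : MeasurePreserving (Prod.swap : ℝ × ℝ → ℝ × ℝ) := Measure.measurePreserving_swap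
  have hemb : MeasurableEmbedding (Prod.swap : ℝ × ℝ → ℝ × ℝ) :=
    MeasurableEquiv.prodComm.measurableEmbedding
  rw [← hswap.setIntegral_preimage_emb hemb]
  exact setIntegral_eq_integral_vertical_slices (F := F ∘ Prod.swap) (measurable_swap hD)
    ((hswap.integrableOn_comp_preimage hemb).2 hF) hab hlr fun _ x => hmem x _

/-- The half-disc of radius `r` centered at `(a, 0)` which lies to the right of the line `x = a`;
the right wing of the stadium is `HalfDisc α β`. -/
def HalfDisc (a r : ℝ) : Set (ℝ × ℝ) := {p | (p.1 - a) ^ 2 + p.2 ^ 2 ≤ r ^ 2 ∧ a ≤ p.1}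

/-- The polar parametrization of the circle of radius `r` centered at `(a, 0)`. -/
def arcPoint (a r θ : ℝ) : ℝ × ℝ := (a + r * cos θ, r * sin θ)

/-- Arc length integral over the curved boundary of `HalfDisc a r` of an integrand depending on
the boundary point and the outward unit normal there. -/
def arcInt (a r : ℝ) (g : ℝ × ℝ → ℝ × ℝ → ℝ) : ℝ :=
  r * ∫ θ in (-(π / 2))..(π / 2), g (arcPoint a r θ) (cos θ, sin θ)

variable {a r : ℝ} {P Q : ℝ × ℝ → ℝ}

@[fun_prop]
lemma continuous_arcPoint (a r : ℝ) : Continuous (arcPoint a r) := by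
  unfold arcPoint; fun_prop

lemma sq_add_sq_le_sq_iff {r : ℝ} (hr : 0 ≤ r) (s t : ℝ) :
    s ^ 2 + t ^ 2 ≤ r ^ 2 ↔ |s| ≤ r ∧ |t| ≤ √(r ^ 2 - s ^ 2) := by
  rw [← sq_le_sq₀ (abs_nonneg s) hr, sq_abs]
  refine ⟨fun h => ⟨by linarith [sq_nonneg t], abs_le_sqrt (by linarith)⟩, fun ⟨hs, ht⟩ => ?_⟩
  have := (le_sqrt (abs_nonneg t) (sub_nonneg.2 hs)).1 ht
  linarith [sq_abs t]

lemma mem_halfDisc_iff_vertical (hr : 0 ≤ r) (x y : ℝ) :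
    (x, y) ∈ HalfDisc a r ↔
      x ∈ Icc a (a + r) ∧ y ∈ Icc (-√(r ^ 2 - (x - a) ^ 2)) √(r ^ 2 - (x - a) ^ 2) := by
  change (x - a) ^ 2 + y ^ 2 ≤ r ^ 2 ∧ a ≤ x ↔ _
  rw [sq_add_sq_le_sq_iff hr, mem_Icc, mem_Icc, ← abs_le]
  refine ⟨fun ⟨⟨_, hy⟩, hx⟩ => ⟨⟨hx, by linarith [le_abs_self (x - a)]⟩, hy⟩,
    fun ⟨⟨hx, _⟩, hy⟩ => ⟨⟨?_, hy⟩, hx⟩⟩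
  rw [abs_of_nonneg (sub_nonneg.2 hx)]
  linarith

lemma mem_halfDisc_iff_horizontal (hr : 0 ≤ r) (x y : ℝ) :
    (x, y) ∈ HalfDisc a r ↔ y ∈ Icc (-r) r ∧ x ∈ Icc a (a + √(r ^ 2 - y ^ 2)) := by
  change (x - a) ^ 2 + y ^ 2 ≤ r ^ 2 ∧ a ≤ x ↔ _
  rw [add_comm, sq_add_sq_le_sq_iff hr, mem_Icc, mem_Icc, ← abs_le]
  refine ⟨fun ⟨⟨hy, _⟩, hx⟩ => ⟨hy, hx, by linarith [le_abs_self (x - a)]⟩,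
    fun ⟨hy, hx, _⟩ => ⟨⟨hy, ?_⟩, hx⟩⟩
  rw [abs_of_nonneg (sub_nonneg.2 hx)]
  linarith

lemma isCompact_halfDisc (hr : 0 ≤ r) : IsCompact (HalfDisc a r) := by
  refine (isCompact_Icc (a := (a, -r)) (b := (a + r, r))).of_isClosed_subset ?_ ?_
  · exact (isClosed_le (f := fun p : ℝ × ℝ => (p.1 - a) ^ 2 + p.2 ^ 2) (by fun_prop)
      continuous_const).inter
      (isClosed_le continuous_const continuous_fst)
  · rintro ⟨x, y⟩ hp
    have hx := ((mem_halfDisc_iff_vertical hr x y).1 hp).1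
    have hy := ((mem_halfDisc_iff_horizontal hr x y).1 hp).1
    exact ⟨⟨hx.1, hy.1⟩, ⟨hx.2, hy.2⟩⟩

lemma sqrt_sq_sub_sq_mul_sin (hr : 0 ≤ r) {θ : ℝ} (hθ : 0 ≤ cos θ) :
    √(r ^ 2 - (r * sin θ) ^ 2) = r * cos θ := by
  rw [show r ^ 2 - (r * sin θ) ^ 2 = (r * cos θ) ^ 2 by
    linear_combination -r ^ 2 * sin_sq_add_cos_sq θ]
  exact sqrt_sq (by positivity)

lemma sqrt_sq_sub_sq_mul_cos (hr : 0 ≤ r) {θ : ℝ} (hθ : 0 ≤ sin θ) :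
    √(r ^ 2 - (r * cos θ) ^ 2) = r * sin θ := by
  rw [show r ^ 2 - (r * cos θ) ^ 2 = (r * sin θ) ^ 2 by
    linear_combination -r ^ 2 * sin_sq_add_cos_sq θ]
  exact sqrt_sq (by positivity)

lemma integral_halfDisc_pdx (hr : 0 ≤ r) (hP : ContDiff ℝ 1 P) :
    ∫ p in HalfDisc a r, pdx P p =
      arcInt a r (fun p n => n.1 * P p) - ∫ y in (-r)..r, P (a, y) := by
  have hPc : Continuous P := hP.continuous
  have hP' : Continuous (pdx P) := continuous_pdx hP
  have ftc : ∀ y, ∫ x in a..(a + √(r ^ 2 - y ^ 2)), pdx P (x, y) =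
      P (a + √(r ^ 2 - y ^ 2), y) - P (a, y) := fun y =>
    intervalIntegral.integral_eq_sub_of_hasDerivAt
      (fun x _ => hasDerivAt_pdx (hP.differentiable one_ne_zero) x y)
      (Continuous.intervalIntegrable (by fun_prop) _ _)
  have polar := intervalIntegral.integral_comp_mul_deriv (a := -(π / 2)) (b := π / 2)
    (f := fun θ => r * sin θ) (g := fun y => P (a + √(r ^ 2 - y ^ 2), y))
    (fun θ _ => (hasDerivAt_sin θ).const_mul r) (by fun_prop) (by fun_prop)
  simp only [sin_neg, sin_pi_div_two, mul_neg, mul_one] at polar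
  rw [setIntegral_eq_integral_horizontal_slices (isCompact_halfDisc hr).measurableSet
    (hP'.continuousOn.integrableOn_compact (isCompact_halfDisc hr)) (by linarith)
    (fun y _ => by linarith [sqrt_nonneg (r ^ 2 - y ^ 2)]) (mem_halfDisc_iff_horizontal hr)]
  simp only [ftc]
  rw [intervalIntegral.integral_sub (Continuous.intervalIntegrable (by fun_prop) _ _)
    (Continuous.intervalIntegrable (by fun_prop) _ _), ← polar, arcInt,
    ← intervalIntegral.integral_const_mul]
  congr 1
  refine intervalIntegral.integral_congr fun θ hθ => ?_
  rw [uIcc_of_le (by linarith [pi_pos])] at hθ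
  simp only [Function.comp, sqrt_sq_sub_sq_mul_sin hr (cos_nonneg_of_mem_Icc hθ), arcPoint]
  ring

lemma intervalIntegral_neg_self {f : ℝ → ℝ} (hf : Continuous f) (c : ℝ) :
    ∫ t in (-c)..c, f t = ∫ t in (0 : ℝ)..c, (f t + f (-t)) := by
  have fold := intervalIntegral.integral_comp_neg (a := 0) (b := c) f
  rw [neg_zero] at fold
  rw [← intervalIntegral.integral_add_adjacent_intervals (hf.intervalIntegrable (-c) 0)
      (hf.intervalIntegrable 0 c), ← fold, add_comm,
    intervalIntegral.integral_add (hf.intervalIntegrable 0 c)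
      (Continuous.intervalIntegrable (by fun_prop) 0 c)]

lemma integral_halfDisc_pdy (hr : 0 ≤ r) (hQ : ContDiff ℝ 1 Q) :
    ∫ p in HalfDisc a r, pdy Q p = arcInt a r (fun p n => n.2 * Q p) := by
  have hQc : Continuous Q := hQ.continuous
  have hQ' : Continuous (pdy Q) := continuous_pdy hQ
  have ftc : ∀ x, ∫ y in (-√(r ^ 2 - (x - a) ^ 2))..√(r ^ 2 - (x - a) ^ 2), pdy Q (x, y) =
      Q (x, √(r ^ 2 - (x - a) ^ 2)) - Q (x, -√(r ^ 2 - (x - a) ^ 2)) := fun x =>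
    intervalIntegral.integral_eq_sub_of_hasDerivAt
      (fun y _ => hasDerivAt_pdy (hQ.differentiable one_ne_zero) x y)
      (Continuous.intervalIntegrable (by fun_prop) _ _)
  have polar := intervalIntegral.integral_comp_mul_deriv (a := 0) (b := π / 2)
    (f := fun θ => a + r * cos θ)
    (g := fun x => Q (x, √(r ^ 2 - (x - a) ^ 2)) - Q (x, -√(r ^ 2 - (x - a) ^ 2)))
    (fun θ _ => ((hasDerivAt_cos θ).const_mul r).const_add a) (by fun_prop) (by fun_prop)
  simp only [cos_zero, cos_pi_div_two, mul_zero, mul_one, add_zero] at polar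
  rw [setIntegral_eq_integral_vertical_slices (isCompact_halfDisc hr).measurableSet
    (hQ'.continuousOn.integrableOn_compact (isCompact_halfDisc hr)) (by linarith)
    (fun x _ => by linarith [sqrt_nonneg (r ^ 2 - (x - a) ^ 2)]) (mem_halfDisc_iff_vertical hr)]
  simp only [ftc]
  rw [arcInt, intervalIntegral_neg_self (by fun_prop), ← intervalIntegral.integral_const_mul,
    intervalIntegral.integral_symm, ← polar, ← intervalIntegral.integral_neg]
  refine intervalIntegral.integral_congr fun θ hθ => ?_
  rw [uIcc_of_le (by linarith [pi_pos])] at hθ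
  have hsin : 0 ≤ sin θ := sin_nonneg_of_mem_Icc ⟨hθ.1, by linarith [hθ.2, pi_pos]⟩
  simp only [Function.comp, add_sub_cancel_left, sqrt_sq_sub_sq_mul_cos hr hsin, arcPoint,
    cos_neg, sin_neg, mul_neg]
  ring

theorem integral_halfDisc_divergence (hr : 0 ≤ r) (hP : ContDiff ℝ 1 P) (hQ : ContDiff ℝ 1 Q) :
    ∫ p in HalfDisc a r, (pdx P p + pdy Q p) =
      arcInt a r (fun p n => n.1 * P p + n.2 * Q p) - ∫ y in (-r)..r, P (a, y) := by
  have hPc := hP.continuous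
  have hQc := hQ.continuous
  have hI : ∀ g : ℝ × ℝ → ℝ, ContDiff ℝ 0 g → IntegrableOn g (HalfDisc a r) := fun g hg =>
    hg.continuous.continuousOn.integrableOn_compact (isCompact_halfDisc hr)
  rw [integral_add (hI _ (contDiff_pdx hP (by simp))) (hI _ (contDiff_pdy hQ (by simp))),
    integral_halfDisc_pdx hr hP, integral_halfDisc_pdy hr hQ, arcInt, arcInt, arcInt,
    intervalIntegral.integral_add (Continuous.intervalIntegrable (by fun_prop) _ _)
      (Continuous.intervalIntegrable (by fun_prop) _ _)]
  ring

end HalfDisc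

section Stadium

variable {α β : ℝ} {F P Q : ℝ × ℝ → ℝ} {g : ℝ × ℝ → ℝ × ℝ → ℝ}

lemma wings_eq_union (α β : ℝ) :
    Wings α β = HalfDisc α β ∪ reflectX ⁻¹' HalfDisc α β := by
  ext p
  have h₁ : (-p.1 - α) ^ 2 = (p.1 + α) ^ 2 := by ring
  have h₂ : α ≤ -p.1 ↔ p.1 ≤ -α := le_neg
  simp only [Wings, HalfDisc, reflectX, mem_union, mem_ofPred_eq, mem_preimage, h₁, h₂]

lemma isCompact_wings (hβ : 0 ≤ β) : IsCompact (Wings α β) := by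
  rw [wings_eq_union]
  exact (isCompact_halfDisc hβ).union
    (((Homeomorph.neg ℝ).prodCongr (Homeomorph.refl ℝ)).isCompact_preimage.2
      (isCompact_halfDisc hβ))

lemma isCompact_stadium (hβ : 0 ≤ β) : IsCompact (Stadium α β) :=
  (isCompact_Icc.prod isCompact_Icc).union (isCompact_wings hβ)

lemma stadiumBoundary_subset_stadium (hβ : 0 ≤ β) : StadiumBoundary α β ⊆ Stadium α β := by
  rintro ⟨x, y⟩ (⟨hx, hy⟩ | ⟨hxy, hx⟩)
  · refine Or.inl ⟨abs_le.1 hx, ?_⟩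
    rcases hy with rfl | rfl
    · exact ⟨neg_le_self hβ, le_rfl⟩
    · exact ⟨le_rfl, neg_le_self hβ⟩
  · refine Or.inr ?_
    rcases abs_cases x with ⟨h, _⟩ | ⟨h, _⟩ <;> rw [h] at hx hxy
    · exact Or.inl ⟨hxy.le, hx⟩
    · exact Or.inr ⟨le_of_eq (by rw [← hxy]; ring), le_neg.1 hx⟩

lemma reflectX_mem_stadiumBoundary {p : ℝ × ℝ} (hp : p ∈ StadiumBoundary α β) :
    reflectX p ∈ StadiumBoundary α β := by
  simpa [StadiumBoundary, reflectX] using hp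

lemma arcPoint_mem_stadiumBoundary (hα : 0 ≤ α) (hβ : 0 ≤ β) {θ : ℝ}
    (hθ : θ ∈ Icc (-(π / 2)) (π / 2)) : arcPoint α β θ ∈ StadiumBoundary α β := by
  have hx : 0 ≤ β * cos θ := mul_nonneg hβ (cos_nonneg_of_mem_Icc hθ)
  refine Or.inr ?_
  simp only [arcPoint, mem_ofPred_eq, abs_of_nonneg (add_nonneg hα hx)]
  exact ⟨by linear_combination β ^ 2 * sin_sq_add_cos_sq θ, by linarith⟩

lemma volume_verticalLine (c : ℝ) : volume {p : ℝ × ℝ | p.1 = c} = 0 := by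
  rw [show {p : ℝ × ℝ | p.1 = c} = {c} ×ˢ univ by ext; simp, Measure.volume_eq_prod,
    Measure.prod_prod, measure_singleton, zero_mul]

lemma setIntegral_stadium (hα : 0 < α) (hβ : 0 ≤ β) (hF : Continuous F) :
    ∫ p in Stadium α β, F p =
      (∫ p in Rect α β, F p) + ((∫ p in HalfDisc α β, F p) +
        ∫ p in reflectX ⁻¹' HalfDisc α β, F p) := by
  have hR : IsCompact (Rect α β) := isCompact_Icc.prod isCompact_Icc
  have hH : IsCompact (HalfDisc α β) := isCompact_halfDisc hβ
  have hW := isCompact_wings (α := α) hβ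
  have hH' : MeasurableSet (reflectX ⁻¹' HalfDisc α β) :=
    measurePreserving_reflectX.measurable hH.measurableSet
  have rect_wings : AEDisjoint volume (Rect α β) (Wings α β) := by
    refine measure_mono_null ?_ (measure_union_null (volume_verticalLine α)
      (volume_verticalLine (-α)))
    rintro p ⟨⟨⟨h₁, h₂⟩, -⟩, ⟨-, h⟩ | ⟨-, h⟩⟩
    · exact Or.inl (le_antisymm h₂ h)
    · exact Or.inr (le_antisymm h h₁)
  have wings : Disjoint (HalfDisc α β) (reflectX ⁻¹' HalfDisc α β) := by
    refine Set.disjoint_left.2 fun p h₁ h₂ => ?_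
    have h₃ : α ≤ -p.1 := h₂.2
    linarith [h₁.2]
  have hIW : IntegrableOn F (Wings α β) := hF.continuousOn.integrableOn_compact hW
  have hIW' := hIW
  rw [wings_eq_union, integrableOn_union] at hIW'
  rw [Stadium, setIntegral_union₀ rect_wings hW.measurableSet.nullMeasurableSet
    (hF.continuousOn.integrableOn_compact hR) hIW, wings_eq_union,
    setIntegral_union wings hH' hIW'.1 hIW'.2]

lemma bdryIntW_eq_arcInt_add (hg : Continuous (Function.uncurry g)) :
    bdryIntW α β g =
      arcInt α β g + arcInt α β (fun p n => g (reflectX p) (reflectX n)) := by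
  have hg' : ∀ p n : ℝ → ℝ × ℝ, Continuous p → Continuous n →
      IntervalIntegrable (fun θ => g (p θ) (n θ)) volume (-(π / 2)) (π / 2) :=
    fun p n hp hn => (hg.comp (hp.prodMk hn)).intervalIntegrable _ _
  rw [bdryIntW, intervalIntegral.integral_add (hg' _ _ (by fun_prop) (by fun_prop))
    (hg' _ _ (by fun_prop) (by fun_prop)), mul_add]
  rfl

lemma bdryInt_eq_flat_add_bdryIntW (α β : ℝ) (g : ℝ × ℝ → ℝ × ℝ → ℝ) :
    bdryInt α β g =
      (∫ x in (-α)..α, (g (x, β) (0, 1) + g (x, -β) (0, -1))) + bdryIntW α β g :=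
  rfl

/-- `IsOutwardNormal α β p n` says that `n` is the outward unit normal at the boundary point `p`
of the stadium. The four constructors follow the pieces over which `bdryInt` integrates. -/
inductive IsOutwardNormal (α β : ℝ) : ℝ × ℝ → ℝ × ℝ → Prop
  | top {x : ℝ} (hx : x ∈ Icc (-α) α) : IsOutwardNormal α β (x, β) (0, 1)
  | bottom {x : ℝ} (hx : x ∈ Icc (-α) α) : IsOutwardNormal α β (x, -β) (0, -1)
  | right {θ : ℝ} (hθ : θ ∈ Icc (-(π / 2)) (π / 2)) :
      IsOutwardNormal α β (arcPoint α β θ) (cos θ, sin θ)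
  | left {θ : ℝ} (hθ : θ ∈ Icc (-(π / 2)) (π / 2)) :
      IsOutwardNormal α β (reflectX (arcPoint α β θ)) (reflectX (cos θ, sin θ))

lemma IsOutwardNormal.mem_stadiumBoundary (hα : 0 ≤ α) (hβ : 0 ≤ β) {p n : ℝ × ℝ}
    (h : IsOutwardNormal α β p n) : p ∈ StadiumBoundary α β := by
  cases h with
  | top hx => exact Or.inl ⟨abs_le.2 hx, Or.inl rfl⟩
  | bottom hx => exact Or.inl ⟨abs_le.2 hx, Or.inr rfl⟩
  | right hθ => exact arcPoint_mem_stadiumBoundary hα hβ hθ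
  | left hθ => exact reflectX_mem_stadiumBoundary (arcPoint_mem_stadiumBoundary hα hβ hθ)

lemma IsOutwardNormal.sq_add_sq {p n : ℝ × ℝ} (h : IsOutwardNormal α β p n) :
    n.1 ^ 2 + n.2 ^ 2 = 1 := by
  cases h <;> simp [reflectX]

lemma bdryInt_congr {g h : ℝ × ℝ → ℝ × ℝ → ℝ} (hα : 0 ≤ α)
    (hgh : ∀ p n, IsOutwardNormal α β p n → g p n = h p n) : bdryInt α β g = bdryInt α β h := by
  rw [bdryInt, bdryInt]
  congr 1
  · refine intervalIntegral.integral_congr fun x hx => ?_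
    rw [uIcc_of_le (by linarith)] at hx
    exact congrArg₂ (· + ·) (hgh _ _ (.top hx)) (hgh _ _ (.bottom hx))
  · congr 1
    refine intervalIntegral.integral_congr fun θ hθ => ?_
    rw [uIcc_of_le (by linarith [pi_pos])] at hθ
    exact congrArg₂ (· + ·) (hgh _ _ (.right hθ)) (hgh _ _ (.left hθ))

lemma integral_rect_divergence (hα : 0 ≤ α) (hβ : 0 ≤ β) (hP : ContDiff ℝ 1 P)
    (hQ : ContDiff ℝ 1 Q) :
    ∫ p in Rect α β, (pdx P p + pdy Q p) =
      (∫ x in (-α)..α, (Q (x, β) - Q (x, -β))) +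
        ((∫ y in (-β)..β, P (α, y)) - ∫ y in (-β)..β, P (-α, y)) := by
  have hPd := hP.differentiable one_ne_zero
  have hQd := hQ.differentiable one_ne_zero
  have hcont : Continuous fun p => pdx P p + pdy Q p :=
    (continuous_pdx hP).add (continuous_pdy hQ)
  rw [Rect, Icc_prod_Icc, intervalIntegral.integral_sub
    (Continuous.intervalIntegrable (by fun_prop) _ _)
    (Continuous.intervalIntegrable (by fun_prop) _ _), ← add_sub_assoc]
  rw [pdx_eq_fderiv hPd, pdy_eq_fderiv hQd] at hcont ⊢
  exact integral_divergence_prod_Icc_of_hasFDerivAt_of_le P Q (fderiv ℝ P) (fderiv ℝ Q)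
    (-α, -β) (α, β) ⟨neg_le_self hα, neg_le_self hβ⟩ hP.continuous.continuousOn
    hQ.continuous.continuousOn (fun p _ => (hPd p).hasFDerivAt) (fun p _ => (hQd p).hasFDerivAt)
    (hcont.continuousOn.integrableOn_compact isCompact_Icc)

lemma integral_preimage_halfDisc_divergence (hβ : 0 ≤ β) (hP : ContDiff ℝ 1 P)
    (hQ : ContDiff ℝ 1 Q) :
    ∫ p in reflectX ⁻¹' HalfDisc α β, (pdx P p + pdy Q p) =
      arcInt α β (fun p n => (reflectX n).1 * P (reflectX p) + (reflectX n).2 * Q (reflectX p)) +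
        ∫ y in (-β)..β, P (-α, y) := by
  have hdiv : ∀ p, pdx P p + pdy Q p =
      pdx (fun q => -(P ∘ reflectX) q) (reflectX p) + pdy (Q ∘ reflectX) (reflectX p) := by
    intro p
    rw [pdx_neg, pdx_comp_reflectX, pdy_comp_reflectX, Function.comp_apply, neg_neg,
      reflectX_reflectX]
  simp only [hdiv]
  rw [setIntegral_comp_reflectX fun q =>
      pdx (fun q => -(P ∘ reflectX) q) q + pdy (Q ∘ reflectX) q,
    integral_halfDisc_divergence hβ (hP.comp contDiff_reflectX).neg (hQ.comp contDiff_reflectX)]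
  simp [reflectX]

theorem integral_stadium_divergence (hα : 0 < α) (hβ : 0 ≤ β) (hP : ContDiff ℝ 1 P)
    (hQ : ContDiff ℝ 1 Q) :
    ∫ p in Stadium α β, (pdx P p + pdy Q p) =
      bdryInt α β fun p n => n.1 * P p + n.2 * Q p := by
  have hPc := hP.continuous
  have hQc := hQ.continuous
  have hcont : Continuous fun p => pdx P p + pdy Q p :=
    (continuous_pdx hP).add (continuous_pdy hQ)
  have flat : ∫ x in (-α)..α, (Q (x, β) - Q (x, -β)) =
      ∫ x in (-α)..α, (((0 : ℝ) * P (x, β) + 1 * Q (x, β)) +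
        ((0 : ℝ) * P (x, -β) + -1 * Q (x, -β))) := by
    simp [sub_eq_add_neg]
  rw [setIntegral_stadium hα hβ hcont, integral_rect_divergence hα.le hβ hP hQ,
    integral_halfDisc_divergence hβ hP hQ, integral_preimage_halfDisc_divergence hβ hP hQ, flat]
  have arcs := bdryIntW_eq_arcInt_add (α := α) (β := β)
    (g := fun p n => n.1 * P p + n.2 * Q p) (by unfold Function.uncurry; fun_prop)
  rw [bdryInt_eq_flat_add_bdryIntW, arcs]
  ring

end Stadium

section Dirichlet

variable {α β a r : ℝ} {u : ℝ × ℝ → ℝ}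

lemma hasDerivAt_eq_zero_of_eqOn_Icc {f : ℝ → ℝ} {f' a b x : ℝ} (hab : a < b)
    (hf : HasDerivAt f f' x) (h₀ : ∀ t ∈ Icc a b, f t = 0) (hx : x ∈ Icc a b) : f' = 0 :=
  (uniqueDiffOn_Icc hab x hx).eq_deriv _ hf.hasDerivWithinAt
    ((hasDerivWithinAt_const x (Icc a b) 0).congr h₀ (h₀ x hx))

lemma hasDerivAt_comp_arcPoint (hu : Differentiable ℝ u) (a r θ : ℝ) :
    HasDerivAt (fun t => u (arcPoint a r t))
      (r * (cos θ * pdy u (arcPoint a r θ) - sin θ * pdx u (arcPoint a r θ))) θ := by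
  have harc : HasDerivAt (arcPoint a r) (r * (-sin θ), r * cos θ) θ :=
    (((hasDerivAt_cos θ).const_mul r).const_add a).prodMk ((hasDerivAt_sin θ).const_mul r)
  refine ((hu _).hasFDerivAt.comp_hasDerivAt θ harc).congr_deriv ?_
  rw [fderiv_eq_pdx_pdy hu]
  ring

lemma tangential_deriv_eq_zero (hr : r ≠ 0) (hu : Differentiable ℝ u)
    (hu₀ : ∀ θ ∈ Icc (-(π / 2)) (π / 2), u (arcPoint a r θ) = 0) {θ : ℝ}
    (hθ : θ ∈ Icc (-(π / 2)) (π / 2)) :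
    cos θ * pdy u (arcPoint a r θ) - sin θ * pdx u (arcPoint a r θ) = 0 :=
  (mul_eq_zero.1 (hasDerivAt_eq_zero_of_eqOn_Icc (by linarith [pi_pos])
    (hasDerivAt_comp_arcPoint hu a r θ) hu₀ hθ)).resolve_left hr

lemma gradient_eq_nderiv_mul_of_arc (hr : r ≠ 0) (hu : Differentiable ℝ u)
    (hu₀ : ∀ θ ∈ Icc (-(π / 2)) (π / 2), u (arcPoint a r θ) = 0) {θ : ℝ}
    (hθ : θ ∈ Icc (-(π / 2)) (π / 2)) :
    pdx u (arcPoint a r θ) = cos θ * nderiv u (arcPoint a r θ) (cos θ, sin θ) ∧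
      pdy u (arcPoint a r θ) = sin θ * nderiv u (arcPoint a r θ) (cos θ, sin θ) := by
  have htan := tangential_deriv_eq_zero hr hu hu₀ hθ
  have htrig := sin_sq_add_cos_sq θ
  constructor <;> dsimp only [nderiv]
  · linear_combination -pdx u (arcPoint a r θ) * htrig - sin θ * htan
  · linear_combination -pdy u (arcPoint a r θ) * htrig + cos θ * htan

lemma nderiv_comp_reflectX (u : ℝ × ℝ → ℝ) (p n : ℝ × ℝ) :
    nderiv (u ∘ reflectX) p n = nderiv u (reflectX p) (reflectX n) := by
  simp only [nderiv, pdx_comp_reflectX, pdy_comp_reflectX, Function.comp_apply, reflectX]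
  ring

lemma gradient_eq_nderiv_mul (hα : 0 < α) (hβ : 0 < β) (hu : Differentiable ℝ u)
    (hu₀ : ∀ p ∈ StadiumBoundary α β, u p = 0) {p n : ℝ × ℝ} (hn : IsOutwardNormal α β p n) :
    pdx u p = n.1 * nderiv u p n ∧ pdy u p = n.2 * nderiv u p n := by
  have flat : ∀ y, (∀ t ∈ Icc (-α) α, u (t, y) = 0) → ∀ x ∈ Icc (-α) α, pdx u (x, y) = 0 :=
    fun y hy x hx => hasDerivAt_eq_zero_of_eqOn_Icc (by linarith) (hasDerivAt_pdx hu x y) hy hx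
  cases hn with
  | top hx =>
    have := flat β (fun t ht => hu₀ _ (IsOutwardNormal.top ht |>.mem_stadiumBoundary hα.le hβ.le))
      _ hx
    simp [nderiv, this]
  | bottom hx =>
    have := flat (-β)
      (fun t ht => hu₀ _ (IsOutwardNormal.bottom ht |>.mem_stadiumBoundary hα.le hβ.le)) _ hx
    simp [nderiv, this]
  | right hθ =>
    exact gradient_eq_nderiv_mul_of_arc hβ.ne' hu
      (fun t ht => hu₀ _ (arcPoint_mem_stadiumBoundary hα.le hβ.le ht)) hθ
  | left hθ =>
    have := gradient_eq_nderiv_mul_of_arc hβ.ne' (hu.comp (contDiff_reflectX.differentiable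
      one_ne_zero)) (fun t ht => hu₀ _ (reflectX_mem_stadiumBoundary
        (arcPoint_mem_stadiumBoundary hα.le hβ.le ht))) hθ
    rw [nderiv_comp_reflectX, pdx_comp_reflectX, pdy_comp_reflectX] at this
    exact ⟨by simpa [reflectX, neg_eq_iff_eq_neg] using this.1, this.2⟩

end Dirichlet

section Identities

variable {α β : ℝ} {u : ℝ × ℝ → ℝ}

lemma integrableOn_stadium {g : ℝ × ℝ → ℝ} (hβ : 0 ≤ β) (hg : Continuous g) :
    IntegrableOn g (Stadium α β) :=
  hg.continuousOn.integrableOn_compact (isCompact_stadium hβ)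

lemma integral_stadium_divergence_eq_zero {P Q : ℝ × ℝ → ℝ} (hα : 0 < α) (hβ : 0 ≤ β)
    (hP : ContDiff ℝ 1 P) (hQ : ContDiff ℝ 1 Q)
    (hflux : ∀ p n, IsOutwardNormal α β p n → n.1 * P p + n.2 * Q p = 0) :
    ∫ p in Stadium α β, (pdx P p + pdy Q p) = 0 := by
  rw [integral_stadium_divergence hα hβ hP hQ, bdryInt_congr (h := fun _ _ => 0) hα.le hflux]
  simp [bdryInt]

theorem sq_l2norm_pdx_add_sq_l2norm_pdy (hα : 0 < α) (hβ : 0 ≤ β) (hu : ContDiff ℝ 2 u)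
    (hu₀ : ∀ p ∈ StadiumBoundary α β, u p = 0) :
    l2norm (Stadium α β) (pdx u) ^ 2 + l2norm (Stadium α β) (pdy u) ^ 2 =
      ∫ p in Stadium α β, u p * lap u p := by
  have hu₁ : ContDiff ℝ 1 u := hu.of_le one_le_two
  have hux : ContDiff ℝ 1 (pdx u) := contDiff_pdx hu le_rfl
  have huy : ContDiff ℝ 1 (pdy u) := contDiff_pdy hu le_rfl
  have hlap : ContDiff ℝ 0 (lap u) := contDiff_lap hu (by simp)
  have hdiv : ∫ p in Stadium α β, (pdx (fun q => u q * pdx u q) p +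
      pdy (fun q => u q * pdy u q) p) = 0 :=
    integral_stadium_divergence_eq_zero hα hβ (hu₁.mul hux) (hu₁.mul huy) fun p n hn => by
      rw [hu₀ p (hn.mem_stadiumBoundary hα.le hβ)]
      ring
  have huc := hu.continuous
  have huxc := hux.continuous
  have huyc := huy.continuous
  have hlapc := hlap.continuous
  rw [sq_l2norm, sq_l2norm, ← sub_eq_zero,
    ← integral_add (integrableOn_stadium hβ (by fun_prop)) (integrableOn_stadium hβ (by fun_prop)),
    ← integral_sub (integrableOn_stadium hβ (by fun_prop)) (integrableOn_stadium hβ (by fun_prop)),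
    ← hdiv]
  refine integral_congr_ae (ae_of_all _ fun p => ?_)
  have hd := hu₁.differentiable one_ne_zero
  simp only [pdx_mul hd (hux.differentiable one_ne_zero),
    pdy_mul hd (huy.differentiable one_ne_zero), lap]
  ring

theorem sq_l2norm_eq_neg_integral_fst_mul (hα : 0 < α) (hβ : 0 ≤ β) (hu : ContDiff ℝ 1 u)
    (hu₀ : ∀ p ∈ StadiumBoundary α β, u p = 0) :
    l2norm (Stadium α β) u ^ 2 = -∫ p in Stadium α β, 2 * p.1 * (u p * pdx u p) := by
  have hux : ContDiff ℝ 0 (pdx u) := contDiff_pdx hu (by simp)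
  have hdiv : ∫ p in Stadium α β, (pdx (fun q => q.1 * (u q * u q)) p +
      pdy (fun _ => 0) p) = 0 :=
    integral_stadium_divergence_eq_zero hα hβ (by fun_prop) contDiff_const fun p n hn => by
      rw [hu₀ p (hn.mem_stadiumBoundary hα.le hβ)]
      ring
  have huc := hu.continuous
  have huxc := hux.continuous
  rw [sq_l2norm, eq_neg_iff_add_eq_zero,
    ← integral_add (integrableOn_stadium hβ (by fun_prop)) (integrableOn_stadium hβ (by fun_prop)),
    ← hdiv]
  refine integral_congr_ae (ae_of_all _ fun p => ?_)
  have hd := hu.differentiable one_ne_zero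
  simp (disch := fun_prop) only [pdx_mul, pdx_fst, pdy_const]
  ring

/-- Integrated form of the commutator identity `[Δ - L, x ∂ₓ] = -2 ∂ₓ²`. -/
theorem integral_commutator (hα : 0 < α) (hβ : 0 < β) (hu : ContDiff ℝ 2 u)
    (hu₀ : ∀ p ∈ StadiumBoundary α β, u p = 0) (L : ℝ) :
    ∫ p in Stadium α β,
        (2 * pdx u p ^ 2 - (u p + 2 * p.1 * pdx u p) * (lap u p - L * u p)) =
      bdryIntW α β fun p n => p.1 * n.1 * nderiv u p n ^ 2 := by
  have hu₁ : ContDiff ℝ 1 u := hu.of_le one_le_two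
  have hux : ContDiff ℝ 1 (pdx u) := contDiff_pdx hu le_rfl
  have huy : ContDiff ℝ 1 (pdy u) := contDiff_pdy hu le_rfl
  have hd := hu₁.differentiable one_ne_zero
  have hdx := hux.differentiable one_ne_zero
  have hdy := huy.differentiable one_ne_zero
  have hdiv := integral_stadium_divergence
    (P := fun p => p.1 * (pdx u p * pdx u p - pdy u p * pdy u p + L * (u p * u p)) + u p * pdx u p)
    (Q := fun p => 2 * p.1 * (pdx u p * pdy u p) + u p * pdy u p)
    hα hβ.le (by fun_prop) (by fun_prop)
  rw [bdryInt_congr (h := fun p n => p.1 * n.1 * nderiv u p n ^ 2) hα.le fun p n hn => ?flux,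
    bdryInt_eq_flat_add_bdryIntW] at hdiv
  case flux =>
    obtain ⟨hx, hy⟩ := gradient_eq_nderiv_mul hα hβ hd hu₀ hn
    rw [hu₀ p (hn.mem_stadiumBoundary hα.le hβ.le), hx, hy]
    linear_combination (p.1 * n.1 * nderiv u p n ^ 2) * hn.sq_add_sq
  simp only [mul_zero, zero_mul, add_zero, intervalIntegral.integral_zero, zero_add] at hdiv
  rw [← hdiv]
  refine integral_congr_ae (ae_of_all _ fun p => ?_)
  simp (disch := fun_prop) only [pdx_add, pdx_sub, pdx_mul, pdx_fst, pdx_const, pdy_add, pdy_mul,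
    pdy_fst, pdy_const, lap, pdx_pdy_comm hu]
  ring

end Identities

section Hessian

variable {α β a r : ℝ} {u : ℝ × ℝ → ℝ}

-- Along the arc `∇u = g n` with `g = ∂ₙu`, and differentiating `∇u · n⊥ = 0` in the angle shows
-- that the tangential part of `(∇u)'` is `g n⊥`: this is where the curvature of the arc enters.
lemma wronskian_gradient_of_arc (hr : r ≠ 0) (hu : ContDiff ℝ 2 u)
    (hu₀ : ∀ θ ∈ Icc (-(π / 2)) (π / 2), u (arcPoint a r θ) = 0) {θ X' Y' : ℝ}
    (hX : HasDerivAt (fun t => pdx u (arcPoint a r t)) X' θ)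
    (hY : HasDerivAt (fun t => pdy u (arcPoint a r t)) Y' θ)
    (hθ : θ ∈ Icc (-(π / 2)) (π / 2)) :
    pdx u (arcPoint a r θ) * Y' - X' * pdy u (arcPoint a r θ) =
      nderiv u (arcPoint a r θ) (cos θ, sin θ) ^ 2 := by
  have hd := hu.differentiable two_ne_zero
  have htan := hasDerivAt_eq_zero_of_eqOn_Icc (by linarith [pi_pos])
    (((hasDerivAt_cos θ).mul hY).sub ((hasDerivAt_sin θ).mul hX))
    (fun t ht => tangential_deriv_eq_zero hr hd hu₀ ht) hθ
  obtain ⟨hx, hy⟩ := gradient_eq_nderiv_mul_of_arc hr hd hu₀ hθ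
  have hn : nderiv u (arcPoint a r θ) (cos θ, sin θ) =
    cos θ * pdx u (arcPoint a r θ) + sin θ * pdy u (arcPoint a r θ) := rfl
  linear_combination Y' * hx - X' * hy +
    nderiv u (arcPoint a r θ) (cos θ, sin θ) * (htan - hn)

lemma two_mul_integral_pdx_mul_deriv_pdy_of_arc (hr : r ≠ 0) (hu : ContDiff ℝ 2 u)
    (hu₀ : ∀ θ ∈ Icc (-(π / 2)) (π / 2), u (arcPoint a r θ) = 0) {X' Y' : ℝ → ℝ}
    (hX : ∀ θ, HasDerivAt (fun t => pdx u (arcPoint a r t)) (X' θ) θ) (hX' : Continuous X')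
    (hY : ∀ θ, HasDerivAt (fun t => pdy u (arcPoint a r t)) (Y' θ) θ) (hY' : Continuous Y') :
    2 * ∫ θ in -(π / 2)..π / 2, pdx u (arcPoint a r θ) * Y' θ =
      ∫ θ in -(π / 2)..π / 2, nderiv u (arcPoint a r θ) (cos θ, sin θ) ^ 2 := by
  have hpi : -(π / 2) ≤ π / 2 := by linarith [pi_pos]
  have grad := fun θ (hθ : θ ∈ Icc (-(π / 2)) (π / 2)) =>
    (gradient_eq_nderiv_mul_of_arc hr (hu.differentiable two_ne_zero) hu₀ hθ).1
  have hXc : Continuous fun t => pdx u (arcPoint a r t) :=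
    continuous_iff_continuousAt.2 fun θ => (hX θ).continuousAt
  have hYc : Continuous fun t => pdy u (arcPoint a r t) :=
    continuous_iff_continuousAt.2 fun θ => (hY θ).continuousAt
  have parts := intervalIntegral.integral_mul_deriv_eq_deriv_mul (fun θ _ => hX θ)
    (fun θ _ => hY θ) (hX'.intervalIntegrable (-(π / 2)) (π / 2)) (hY'.intervalIntegrable _ _)
  rw [grad _ (right_mem_Icc.2 hpi), grad _ (left_mem_Icc.2 hpi), cos_neg, cos_pi_div_two] at parts
  have wronskian : ∫ θ in -(π / 2)..π / 2, nderiv u (arcPoint a r θ) (cos θ, sin θ) ^ 2 =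
      (∫ θ in -(π / 2)..π / 2, pdx u (arcPoint a r θ) * Y' θ) -
        ∫ θ in -(π / 2)..π / 2, X' θ * pdy u (arcPoint a r θ) := by
    rw [← intervalIntegral.integral_sub (Continuous.intervalIntegrable (by fun_prop) _ _)
      (Continuous.intervalIntegrable (by fun_prop) _ _)]
    refine intervalIntegral.integral_congr fun θ hθ => ?_
    rw [uIcc_of_le hpi] at hθ
    exact (wronskian_gradient_of_arc hr hu hu₀ (hX θ) (hY θ) hθ).symm
  linear_combination parts - wronskian

/-- The outward flux of the field `(uₓ u_yy, -uₓ u_xy)`, whose divergence is the Hessian determinant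
of `u`, through a boundary point `p` with outward normal `n` at which `∇u` is parallel to `n`. -/
def hessianFlux (u : ℝ × ℝ → ℝ) (p n : ℝ × ℝ) : ℝ :=
  n.1 * nderiv u p n * (n.1 * pdy (pdy u) p - n.2 * pdx (pdy u) p)

lemma hessianFlux_comp_reflectX (u : ℝ × ℝ → ℝ) (p n : ℝ × ℝ) :
    hessianFlux (u ∘ reflectX) p n = hessianFlux u (reflectX p) (reflectX n) := by
  simp only [hessianFlux, nderiv_comp_reflectX, pdx_comp_reflectX, pdy_comp_reflectX,
    Function.comp_apply, reflectX]
  ring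

lemma arcInt_hessianFlux (hr : r ≠ 0) (hu : ContDiff ℝ 2 u)
    (hu₀ : ∀ θ ∈ Icc (-(π / 2)) (π / 2), u (arcPoint a r θ) = 0) :
    2 * r * arcInt a r (hessianFlux u) = arcInt a r fun p n => nderiv u p n ^ 2 := by
  have hux : ContDiff ℝ 1 (pdx u) := contDiff_pdx hu le_rfl
  have huy : ContDiff ℝ 1 (pdy u) := contDiff_pdy hu le_rfl
  have := continuous_pdx hux
  have := continuous_pdx huy
  have := continuous_pdy hux
  have := continuous_pdy huy
  have key := two_mul_integral_pdx_mul_deriv_pdy_of_arc hr hu hu₀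
    (hasDerivAt_comp_arcPoint (hux.differentiable one_ne_zero) a r) (by fun_prop)
    (hasDerivAt_comp_arcPoint (huy.differentiable one_ne_zero) a r) (by fun_prop)
  have flux : r * (∫ θ in -(π / 2)..π / 2, hessianFlux u (arcPoint a r θ) (cos θ, sin θ)) =
      ∫ θ in -(π / 2)..π / 2, pdx u (arcPoint a r θ) *
        (r * (cos θ * pdy (pdy u) (arcPoint a r θ) - sin θ * pdx (pdy u) (arcPoint a r θ))) := by
    rw [← intervalIntegral.integral_const_mul]
    refine intervalIntegral.integral_congr fun θ hθ => ?_
    rw [uIcc_of_le (by linarith [pi_pos])] at hθ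
    rw [(gradient_eq_nderiv_mul_of_arc hr (hu.differentiable two_ne_zero) hu₀ hθ).1, hessianFlux]
    ring
  rw [arcInt, arcInt, flux]
  linear_combination r * key

lemma arcInt_hessianFlux_nonneg (hr : 0 < r) (hu : ContDiff ℝ 2 u)
    (hu₀ : ∀ θ ∈ Icc (-(π / 2)) (π / 2), u (arcPoint a r θ) = 0) :
    0 ≤ arcInt a r (hessianFlux u) := by
  refine nonneg_of_mul_nonneg_right (?_ : 0 ≤ 2 * r * _) (by positivity)
  rw [arcInt_hessianFlux hr.ne' hu hu₀]
  exact mul_nonneg hr.le (intervalIntegral.integral_nonneg (by linarith [pi_pos])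
    fun θ _ => sq_nonneg _)

lemma integral_hessian_det_eq_bdryIntW (hα : 0 < α) (hβ : 0 < β) (hu : ContDiff ℝ 3 u)
    (hu₀ : ∀ p ∈ StadiumBoundary α β, u p = 0) :
    ∫ p in Stadium α β, (pdx (pdx u) p * pdy (pdy u) p - pdx (pdy u) p ^ 2) =
      bdryIntW α β (hessianFlux u) := by
  have hux : ContDiff ℝ 2 (pdx u) := contDiff_pdx hu (by norm_num)
  have huy : ContDiff ℝ 2 (pdy u) := contDiff_pdy hu (by norm_num)
  have huyx : ContDiff ℝ 1 (pdx (pdy u)) := contDiff_pdx huy (by norm_num)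
  have huyy : ContDiff ℝ 1 (pdy (pdy u)) := contDiff_pdy huy (by norm_num)
  have hux₁ : ContDiff ℝ 1 (pdx u) := hux.of_le one_le_two
  have hdiv := integral_stadium_divergence (P := fun p => pdx u p * pdy (pdy u) p)
    (Q := fun p => -1 * (pdx u p * pdx (pdy u) p)) hα hβ.le (by fun_prop) (by fun_prop)
  rw [bdryInt_congr (h := hessianFlux u) hα.le fun p n hn => ?flux,
    bdryInt_eq_flat_add_bdryIntW] at hdiv
  case flux =>
    rw [(gradient_eq_nderiv_mul hα hβ (hu.differentiable three_ne_zero) hu₀ hn).1, hessianFlux]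
    ring
  have flat : ∀ p n : ℝ × ℝ, n.1 = 0 → hessianFlux u p n = 0 := fun p n hn => by
    rw [hessianFlux, hn, zero_mul, zero_mul]
  rw [intervalIntegral.integral_congr (g := fun _ => 0) fun x _ => by simp [flat],
    intervalIntegral.integral_zero, zero_add] at hdiv
  rw [← hdiv]
  refine integral_congr_ae (ae_of_all _ fun p => ?_)
  have := hux₁.differentiable one_ne_zero
  have := huyx.differentiable one_ne_zero
  have := huyy.differentiable one_ne_zero
  simp (disch := fun_prop) only [pdx_mul, pdy_mul, pdy_const]
  rw [pdx_pdy_comm huy, pdx_pdy_comm (hu.of_le (by norm_num))]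
  ring

theorem integral_hessian_det_nonneg (hα : 0 < α) (hβ : 0 < β) (hu : ContDiff ℝ 3 u)
    (hu₀ : ∀ p ∈ StadiumBoundary α β, u p = 0) :
    0 ≤ ∫ p in Stadium α β, (pdx (pdx u) p * pdy (pdy u) p - pdx (pdy u) p ^ 2) := by
  have hu₂ : ContDiff ℝ 2 u := hu.of_le (by norm_num)
  have hux : ContDiff ℝ 2 (pdx u) := contDiff_pdx hu (by norm_num)
  have huy : ContDiff ℝ 2 (pdy u) := contDiff_pdy hu (by norm_num)
  have cont : Continuous (Function.uncurry (hessianFlux u)) := by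
    have := hux.continuous
    have := huy.continuous
    have := continuous_pdx (huy.of_le one_le_two)
    have := continuous_pdy (huy.of_le one_le_two)
    unfold Function.uncurry hessianFlux nderiv
    fun_prop
  rw [integral_hessian_det_eq_bdryIntW hα hβ hu hu₀, bdryIntW_eq_arcInt_add cont]
  simp only [← hessianFlux_comp_reflectX]
  exact add_nonneg
    (arcInt_hessianFlux_nonneg hβ hu₂ fun θ hθ =>
      hu₀ _ (arcPoint_mem_stadiumBoundary hα.le hβ.le hθ))
    (arcInt_hessianFlux_nonneg hβ (hu₂.comp contDiff_reflectX) fun θ hθ =>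
      hu₀ _ (reflectX_mem_stadiumBoundary (arcPoint_mem_stadiumBoundary hα.le hβ.le hθ)))

theorem two_mul_l2norm_pdx_pdy_le (hα : 0 < α) (hβ : 0 < β) (hu : ContDiff ℝ 3 u)
    (hu₀ : ∀ p ∈ StadiumBoundary α β, u p = 0) :
    2 * l2norm (Stadium α β) (pdx (pdy u)) ≤ l2norm (Stadium α β) (lap u) := by
  have hux : ContDiff ℝ 2 (pdx u) := contDiff_pdx hu (by norm_num)
  have huy : ContDiff ℝ 2 (pdy u) := contDiff_pdy hu (by norm_num)
  have := continuous_pdx (hux.of_le one_le_two)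
  have := continuous_pdx (huy.of_le one_le_two)
  have := continuous_pdy (huy.of_le one_le_two)
  have hlap : ContDiff ℝ 1 (lap u) := contDiff_lap hu (by norm_num)
  have hlapc := hlap.continuous
  refine le_of_sq_le_sq ?_ (l2norm_nonneg _ _)
  rw [mul_pow, sq_l2norm, sq_l2norm, ← sub_nonneg, ← integral_const_mul,
    ← integral_sub (integrableOn_stadium hβ.le (by fun_prop))
      (integrableOn_stadium hβ.le (by fun_prop))]
  calc 0 ≤ 4 * ∫ p in Stadium α β, (pdx (pdx u) p * pdy (pdy u) p - pdx (pdy u) p ^ 2) :=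
        mul_nonneg zero_le_four (integral_hessian_det_nonneg hα hβ hu hu₀)
    _ ≤ ∫ p in Stadium α β, (lap u p ^ 2 - 2 ^ 2 * pdx (pdy u) p ^ 2) := by
        rw [← integral_const_mul]
        refine integral_mono (integrableOn_stadium hβ.le (by fun_prop))
          (integrableOn_stadium hβ.le (by fun_prop)) fun p => ?_
        simp only [lap]
        nlinarith [sq_nonneg (pdx (pdx u) p - pdy (pdy u) p)]

end Hessian

section Wing

variable {a r : ℝ} {u : ℝ × ℝ → ℝ}

lemma arcInt_congr {g h : ℝ × ℝ → ℝ × ℝ → ℝ} (hgh : ∀ θ ∈ Icc (-(π / 2)) (π / 2),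
    g (arcPoint a r θ) (cos θ, sin θ) = h (arcPoint a r θ) (cos θ, sin θ)) :
    arcInt a r g = arcInt a r h := by
  refine congrArg (r * ·) (intervalIntegral.integral_congr fun θ hθ => ?_)
  rw [uIcc_of_le (by linarith [pi_pos])] at hθ
  exact hgh θ hθ

lemma arcInt_const_mul (c : ℝ) (g : ℝ × ℝ → ℝ × ℝ → ℝ) :
    arcInt a r (fun p n => c * g p n) = c * arcInt a r g := by
  rw [arcInt, arcInt, intervalIntegral.integral_const_mul, mul_left_comm]

theorem arcInt_fst_mul_sq_nderiv (hr : 0 < r) (hu : ContDiff ℝ 2 u)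
    (hu₀ : ∀ θ ∈ Icc (-(π / 2)) (π / 2), u (arcPoint a r θ) = 0) (L : ℝ) :
    r ^ 2 / 2 * arcInt a r (fun p n => n.1 * nderiv u p n ^ 2) =
      ∫ p in HalfDisc a r,
        (u p * (2 * L * (p.1 - a) * u p - 3 / 2 * pdx u p - p.2 * pdx (pdy u) p) +
          (p.1 - a) * (1 / 2 * u p - (p.1 - a) * pdx u p - p.2 * pdy u p) *
            (lap u p - L * u p) - (p.1 - a) * pdy u p ^ 2) := by
  have hu₁ : ContDiff ℝ 1 u := hu.of_le one_le_two
  have hux : ContDiff ℝ 1 (pdx u) := contDiff_pdx hu le_rfl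
  have huy : ContDiff ℝ 1 (pdy u) := contDiff_pdy hu le_rfl
  have hd := hu₁.differentiable one_ne_zero
  have hdx := hux.differentiable one_ne_zero
  have hdy := huy.differentiable one_ne_zero
  have hdiv := integral_halfDisc_divergence (a := a) hr.le
    (P := fun p => (p.1 - a) * (((p.1 - a) * pdx u p + p.2 * pdy u p) * pdx u p -
      1 / 2 * (p.1 - a) * (pdx u p * pdx u p + pdy u p * pdy u p - L * (u p * u p)) -
        1 / 2 * (u p * pdx u p)))
    (Q := fun p => (p.1 - a) * (((p.1 - a) * pdx u p + p.2 * pdy u p) * pdy u p -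
      1 / 2 * p.2 * (pdx u p * pdx u p + pdy u p * pdy u p - L * (u p * u p)) -
        1 / 2 * (u p * pdy u p)) - p.2 * (u p * pdx u p))
    (by fun_prop) (by fun_prop)
  simp only [sub_self, zero_mul, intervalIntegral.integral_zero, sub_zero] at hdiv
  rw [← arcInt_const_mul, arcInt_congr fun θ hθ => ?flux, ← hdiv]
  case flux =>
    obtain ⟨hx, hy⟩ := gradient_eq_nderiv_mul_of_arc hr.ne' hd hu₀ hθ
    have hp₁ : (arcPoint a r θ).1 - a = r * cos θ := add_sub_cancel_left _ _
    have hp₂ : (arcPoint a r θ).2 = r * sin θ := rfl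
    rw [hu₀ θ hθ, hx, hy, hp₁, hp₂]
    linear_combination (-(r ^ 2 / 2) * cos θ * nderiv u (arcPoint a r θ) (cos θ, sin θ) ^ 2 *
      (1 + sin θ ^ 2 + cos θ ^ 2)) * sin_sq_add_cos_sq θ
  refine integral_congr_ae (ae_of_all _ fun p => ?_)
  simp (disch := fun_prop) only [pdx_add, pdx_sub, pdx_mul, pdx_fst, pdx_snd, pdx_const, pdy_add,
    pdy_sub, pdy_mul, pdy_fst, pdy_snd, pdy_const, lap, pdx_pdy_comm hu]
  ring

end Wing

section WingEstimate

variable {a r L : ℝ} {u : ℝ × ℝ → ℝ}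

lemma abs_fst_sub_le_of_mem_halfDisc (hr : 0 ≤ r) {p : ℝ × ℝ} (hp : p ∈ HalfDisc a r) :
    |p.1 - a| ≤ r :=
  abs_le_of_sq_le_sq ((le_add_of_nonneg_right (sq_nonneg _)).trans hp.1) hr

lemma abs_snd_le_of_mem_halfDisc (hr : 0 ≤ r) {p : ℝ × ℝ} (hp : p ∈ HalfDisc a r) : |p.2| ≤ r :=
  abs_le_of_sq_le_sq ((le_add_of_nonneg_left (sq_nonneg _)).trans hp.1) hr

lemma arcInt_fst_mul_sq_nderiv_le_add_integral (hr : 0 < r) (hu : ContDiff ℝ 2 u)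
    (hu₀ : ∀ θ ∈ Icc (-(π / 2)) (π / 2), u (arcPoint a r θ) = 0) {f : ℝ × ℝ → ℝ}
    (hf : ∀ p, f p = lap u p - L * u p) :
    r ^ 2 / 2 * arcInt a r (fun p n => n.1 * nderiv u p n ^ 2) ≤
      (∫ p in HalfDisc a r, 2 * L * (p.1 - a) * (u p * u p)) +
      (∫ p in HalfDisc a r, -(3 / 2) * (u p * pdx u p)) +
      (∫ p in HalfDisc a r, -p.2 * (u p * pdx (pdy u) p)) +
      (∫ p in HalfDisc a r, 1 / 2 * (p.1 - a) * (f p * u p)) +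
      (∫ p in HalfDisc a r, -(p.1 - a) ^ 2 * (f p * pdx u p)) +
      (∫ p in HalfDisc a r, -((p.1 - a) * p.2) * (f p * pdy u p)) := by
  have hH : IsCompact (HalfDisc a r) := isCompact_halfDisc hr.le
  have hu₁ := hu.of_le one_le_two
  have huc := hu.continuous
  have huxc := continuous_pdx hu₁
  have huyc := continuous_pdy hu₁
  have huyxc := continuous_pdx (contDiff_pdy (m := 1) hu le_rfl)
  have hlap : ContDiff ℝ 0 (lap u) := contDiff_lap hu (by simp)
  have hlapc := hlap.continuous
  have hfc : Continuous f := by rw [funext hf]; fun_prop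
  have hI : ∀ {k : ℝ × ℝ → ℝ}, Continuous k → IntegrableOn k (HalfDisc a r) := fun hk =>
    hk.continuousOn.integrableOn_compact hH
  rw [arcInt_fst_mul_sq_nderiv hr hu hu₀ L, ← integral_add (hI (by fun_prop)) (hI (by fun_prop)),
    ← integral_add (hI (by fun_prop)) (hI (by fun_prop)),
    ← integral_add (hI (by fun_prop)) (hI (by fun_prop)),
    ← integral_add (hI (by fun_prop)) (hI (by fun_prop)),
    ← integral_add (hI (by fun_prop)) (hI (by fun_prop))]
  refine setIntegral_mono_on (hI (by fun_prop)) (hI (by fun_prop)) hH.measurableSet fun p hp => ?_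
  have drop : 0 ≤ (p.1 - a) * pdy u p ^ 2 := mul_nonneg (sub_nonneg.2 hp.2) (sq_nonneg _)
  rw [hf p]
  linear_combination drop

theorem arcInt_fst_mul_sq_nderiv_le (hr : 0 < r) (hL : 0 ≤ L) (hu : ContDiff ℝ 2 u)
    (hu₀ : ∀ θ ∈ Icc (-(π / 2)) (π / 2), u (arcPoint a r θ) = 0) {f : ℝ × ℝ → ℝ}
    (hf : ∀ p, f p = lap u p - L * u p) :
    r ^ 2 / 2 * arcInt a r (fun p n => n.1 * nderiv u p n ^ 2) ≤
      l2norm (HalfDisc a r) u * (2 * L * r * l2norm (HalfDisc a r) u +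
          3 / 2 * l2norm (HalfDisc a r) (pdx u) + r * l2norm (HalfDisc a r) (pdx (pdy u))) +
        l2norm (HalfDisc a r) f * (1 / 2 * r * l2norm (HalfDisc a r) u +
          r ^ 2 * (l2norm (HalfDisc a r) (pdx u) + l2norm (HalfDisc a r) (pdy u))) := by
  have hu₁ := hu.of_le one_le_two
  have huc := hu.continuous
  have huxc := continuous_pdx hu₁
  have huyc := continuous_pdy hu₁
  have huyxc := continuous_pdx (contDiff_pdy (m := 1) hu le_rfl)
  have hlap : ContDiff ℝ 0 (lap u) := contDiff_lap hu (by simp)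
  have hlapc := hlap.continuous
  have hfc : Continuous f := by rw [funext hf]; fun_prop
  have hx := fun p (hp : p ∈ HalfDisc a r) => abs_fst_sub_le_of_mem_halfDisc hr.le hp
  have hy := fun p (hp : p ∈ HalfDisc a r) => abs_snd_le_of_mem_halfDisc hr.le hp
  have bound : ∀ (m : ℝ × ℝ → ℝ) {g h : ℝ × ℝ → ℝ} (M : ℝ), 0 ≤ M →
    (∀ p ∈ HalfDisc a r, |m p| ≤ M) → Continuous g → Continuous h →
    ∫ p in HalfDisc a r, m p * (g p * h p) ≤
      M * (l2norm (HalfDisc a r) g * l2norm (HalfDisc a r) h) :=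
    fun m _ _ M hM hm hg hh => (le_abs_self _).trans
      (abs_setIntegral_mul_mul_le (isCompact_halfDisc hr.le) hM hm hg hh)
  have huu := bound (fun p => 2 * L * (p.1 - a)) (2 * L * r) (by positivity) (fun p hp => by
    rw [abs_mul, abs_of_nonneg (by positivity)]; gcongr; exact hx p hp) huc huc
  have huux := bound (fun _ => -(3 / 2)) (3 / 2) (by positivity)
    (fun p _ => by norm_num [abs_of_nonneg]) huc huxc
  have huuyx := bound (fun p => -p.2) r hr.le (fun p hp => (abs_neg _).trans_le (hy p hp)) huc huyxc
  have hfu := bound (fun p => 1 / 2 * (p.1 - a)) (1 / 2 * r) (by positivity) (fun p hp => by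
    rw [abs_mul, abs_of_nonneg one_half_pos.le]; gcongr; exact hx p hp) hfc huc
  have hfux := bound (fun p => -(p.1 - a) ^ 2) (r ^ 2) (by positivity) (fun p hp => by
    rw [abs_neg, abs_pow]; gcongr; exact hx p hp) hfc huxc
  have hfuy := bound (fun p => -((p.1 - a) * p.2)) (r * r) (by positivity) (fun p hp => by
    rw [abs_neg, abs_mul]; gcongr; exacts [hx p hp, hy p hp]) hfc huyc
  refine (arcInt_fst_mul_sq_nderiv_le_add_integral hr hu hu₀ hf).trans ?_
  linear_combination huu + huux + huuyx + hfu + hfux + hfuy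

end WingEstimate

section BoundaryFlux

variable {α β a r : ℝ} {u : ℝ × ℝ → ℝ} {D : Set (ℝ × ℝ)}

lemma arcInt_mono (hr : 0 ≤ r) {g h : ℝ × ℝ → ℝ × ℝ → ℝ} (hg : Continuous (Function.uncurry g))
    (hh : Continuous (Function.uncurry h)) (hgh : ∀ θ ∈ Icc (-(π / 2)) (π / 2),
      g (arcPoint a r θ) (cos θ, sin θ) ≤ h (arcPoint a r θ) (cos θ, sin θ)) :
    arcInt a r g ≤ arcInt a r h := by
  have integrable : ∀ {k : ℝ × ℝ → ℝ × ℝ → ℝ}, Continuous (Function.uncurry k) →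
      IntervalIntegrable (fun θ => k (arcPoint a r θ) (cos θ, sin θ)) volume (-(π / 2)) (π / 2) :=
    fun hk => (hk.comp (by fun_prop : Continuous fun θ => (arcPoint a r θ, cos θ, sin θ))
      ).intervalIntegrable _ _
  exact mul_le_mul_of_nonneg_left (intervalIntegral.integral_mono_on (by linarith [pi_pos])
    (integrable hg) (integrable hh) hgh) hr

lemma continuous_uncurry_nderiv (hu : ContDiff ℝ 1 u) :
    Continuous (Function.uncurry (nderiv u)) := by
  have := continuous_pdx hu
  have := continuous_pdy hu
  unfold nderiv Function.uncurry
  fun_prop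

lemma arcInt_fst_mul_fst_mul_sq_nderiv_le (hβ : 0 ≤ β) (hu : ContDiff ℝ 1 u) :
    arcInt α β (fun p n => p.1 * n.1 * nderiv u p n ^ 2) ≤
      (α + β) * arcInt α β (fun p n => n.1 * nderiv u p n ^ 2) := by
  have hν := continuous_uncurry_nderiv hu
  unfold Function.uncurry at hν
  rw [← arcInt_const_mul]
  refine arcInt_mono hβ (by unfold Function.uncurry; fun_prop)
    (by unfold Function.uncurry; fun_prop) fun θ hθ => ?_
  have hcos := cos_nonneg_of_mem_Icc hθ
  rw [mul_assoc]
  gcongr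
  change α + β * cos θ ≤ α + β
  gcongr
  exact mul_le_of_le_one_right hβ (cos_le_one θ)

lemma bdryIntW_fst_mul_fst_mul_sq_nderiv_le (hβ : 0 ≤ β) (hu : ContDiff ℝ 1 u) :
    bdryIntW α β (fun p n => p.1 * n.1 * nderiv u p n ^ 2) ≤
      (α + β) * (arcInt α β (fun p n => n.1 * nderiv u p n ^ 2) +
        arcInt α β (fun p n => n.1 * nderiv (u ∘ reflectX) p n ^ 2)) := by
  have hν := continuous_uncurry_nderiv hu
  unfold Function.uncurry at hν
  have reflect : (fun p n => (reflectX p).1 * (reflectX n).1 *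
      nderiv u (reflectX p) (reflectX n) ^ 2) =
      fun p n => p.1 * n.1 * nderiv (u ∘ reflectX) p n ^ 2 := by
    funext p n
    rw [nderiv_comp_reflectX]
    simp only [reflectX, neg_mul_neg]
  rw [bdryIntW_eq_arcInt_add (by unfold Function.uncurry; fun_prop), reflect, mul_add]
  exact add_le_add (arcInt_fst_mul_fst_mul_sq_nderiv_le hβ hu)
    (arcInt_fst_mul_fst_mul_sq_nderiv_le hβ (hu.comp contDiff_reflectX))

lemma l2norm_comp_reflectX_of_preimage_eq (hD : reflectX ⁻¹' D = D) (g : ℝ × ℝ → ℝ) :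
    l2norm D (g ∘ reflectX) = l2norm D g := by
  conv_lhs => rw [← hD, l2norm_comp_reflectX]

lemma l2norm_pdx_comp_reflectX (hD : reflectX ⁻¹' D = D) :
    l2norm D (pdx (u ∘ reflectX)) = l2norm D (pdx u) := by
  rw [pdx_comp_reflectX, l2norm_neg]
  exact l2norm_comp_reflectX_of_preimage_eq hD (pdx u)

lemma reflectX_preimage_wings (α β : ℝ) : reflectX ⁻¹' Wings α β = Wings α β := by
  have hinv : reflectX ⁻¹' (reflectX ⁻¹' HalfDisc α β) = HalfDisc α β := by
    ext p
    simp only [mem_preimage, reflectX_reflectX]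
  rw [wings_eq_union, preimage_union, hinv, union_comm]

lemma reflectX_preimage_stadium (α β : ℝ) : reflectX ⁻¹' Stadium α β = Stadium α β := by
  rw [Stadium, preimage_union, reflectX_preimage_wings]
  congr 1
  ext p
  simp only [Rect, reflectX, mem_preimage, mem_prod, mem_Icc, neg_le_neg_iff, neg_le, and_comm]

end BoundaryFlux

section FluxBound

variable {α β L : ℝ} {u : ℝ × ℝ → ℝ}

lemma arcInt_fst_mul_sq_nderiv_le_l2norm_stadium (hα : 0 ≤ α) (hβ : 0 < β) (hL : 0 ≤ L)
    (hu : ContDiff ℝ 2 u) (hu₀ : ∀ p ∈ StadiumBoundary α β, u p = 0) :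
    β ^ 2 / 2 * arcInt α β (fun p n => n.1 * nderiv u p n ^ 2) ≤
      l2norm (Wings α β) u * (2 * L * β * l2norm (Wings α β) u +
          3 / 2 * l2norm (Stadium α β) (pdx u) + β * l2norm (Stadium α β) (pdx (pdy u))) +
        l2norm (Stadium α β) (fun p => lap u p - L * u p) *
          (1 / 2 * β * l2norm (Wings α β) u +
            β ^ 2 * (l2norm (Stadium α β) (pdx u) + l2norm (Stadium α β) (pdy u))) := by
  have hu₁ := hu.of_le one_le_two
  have huc := hu.continuous
  have huyxc := continuous_pdx (contDiff_pdy (m := 1) hu le_rfl)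
  have hlap : ContDiff ℝ 0 (lap u) := contDiff_lap hu (by simp)
  have hlapc := hlap.continuous
  have hHW : HalfDisc α β ⊆ Wings α β := by rw [wings_eq_union]; exact subset_union_left
  have hHS : HalfDisc α β ⊆ Stadium α β := hHW.trans subset_union_right
  refine (arcInt_fst_mul_sq_nderiv_le hβ hL hu
    (fun θ hθ => hu₀ _ (arcPoint_mem_stadiumBoundary hα hβ.le hθ)) fun _ => rfl).trans ?_
  have mono : ∀ {g : ℝ × ℝ → ℝ}, Continuous g →
      l2norm (HalfDisc α β) g ≤ l2norm (Stadium α β) g := fun hg =>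
    l2norm_mono (isCompact_stadium hβ.le) hg hHS
  have hw := l2norm_mono (isCompact_wings hβ.le) huc hHW
  have hx := mono (continuous_pdx hu₁)
  have hy := mono (continuous_pdy hu₁)
  have hxy := mono huyxc
  have hf := mono (g := fun p => lap u p - L * u p) (by fun_prop)
  have nonneg := l2norm_nonneg (HalfDisc α β)
  have hw₀ := l2norm_nonneg (Wings α β) u
  have hf₀ := l2norm_nonneg (Stadium α β) (fun p => lap u p - L * u p)
  have := nonneg u
  have := nonneg (pdx u)
  have := nonneg (pdy u)
  have := nonneg (pdx (pdy u))
  gcongr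

theorem bdryIntW_fst_mul_fst_mul_sq_nderiv_le_l2norm (hα : 0 ≤ α) (hβ : 0 < β) (hL : 0 ≤ L)
    (hu : ContDiff ℝ 2 u) (hu₀ : ∀ p ∈ StadiumBoundary α β, u p = 0) :
    β ^ 2 / 2 * bdryIntW α β (fun p n => p.1 * n.1 * nderiv u p n ^ 2) ≤
      2 * (α + β) * (l2norm (Wings α β) u * (2 * L * β * l2norm (Wings α β) u +
          3 / 2 * l2norm (Stadium α β) (pdx u) + β * l2norm (Stadium α β) (pdx (pdy u))) +
        l2norm (Stadium α β) (fun p => lap u p - L * u p) *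
          (1 / 2 * β * l2norm (Wings α β) u +
            β ^ 2 * (l2norm (Stadium α β) (pdx u) + l2norm (Stadium α β) (pdy u)))) := by
  have hS := reflectX_preimage_stadium α β
  have hright := arcInt_fst_mul_sq_nderiv_le_l2norm_stadium hα hβ hL hu hu₀
  have hleft := arcInt_fst_mul_sq_nderiv_le_l2norm_stadium hα hβ hL (hu.comp contDiff_reflectX)
    fun p hp => hu₀ _ (reflectX_mem_stadiumBoundary hp)
  have hf : (fun p => lap (u ∘ reflectX) p - L * (u ∘ reflectX) p) =
      (fun p => lap u p - L * u p) ∘ reflectX := by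
    rw [lap_comp_reflectX]
    rfl
  rw [hf, pdy_comp_reflectX, l2norm_pdx_comp_reflectX hS, l2norm_pdx_comp_reflectX hS,
    l2norm_comp_reflectX_of_preimage_eq (reflectX_preimage_wings α β),
    l2norm_comp_reflectX_of_preimage_eq hS, l2norm_comp_reflectX_of_preimage_eq hS] at hleft
  have hsplit := bdryIntW_fst_mul_fst_mul_sq_nderiv_le (α := α) hβ.le (hu.of_le one_le_two)
  linear_combination β ^ 2 / 2 * hsplit + (α + β) * (hright + hleft)

end FluxBound

section Control

variable {α β L : ℝ} {u : ℝ × ℝ → ℝ}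

lemma abs_two_mul_fst_le_of_mem_stadium (hα : 0 ≤ α) (hβ : 0 ≤ β) {p : ℝ × ℝ}
    (hp : p ∈ Stadium α β) : |2 * p.1| ≤ 2 * (α + β) := by
  rw [abs_mul, abs_two]
  refine mul_le_mul_of_nonneg_left (abs_le.2 ?_) zero_le_two
  rcases hp with ⟨⟨hl, hr⟩, -⟩ | ⟨hd, hx⟩ | ⟨hd, hx⟩
  · constructor <;> linarith
  all_goals
    obtain ⟨hl, hr⟩ := abs_le.1 (abs_le_of_sq_le_sq
      ((le_add_of_nonneg_right (sq_nonneg _)).trans hd) hβ)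
    constructor <;> linarith

theorem l2norm_le_mul_l2norm_pdx (hα : 0 < α) (hβ : 0 ≤ β) (hu : ContDiff ℝ 1 u)
    (hu₀ : ∀ p ∈ StadiumBoundary α β, u p = 0) :
    l2norm (Stadium α β) u ≤ 2 * (α + β) * l2norm (Stadium α β) (pdx u) := by
  have hweight : ∀ p ∈ Stadium α β, |2 * p.1| ≤ 2 * (α + β) := fun p hp =>
    abs_two_mul_fst_le_of_mem_stadium hα.le hβ hp
  have hcs := abs_setIntegral_mul_mul_le (isCompact_stadium hβ) (by positivity) hweight
    hu.continuous (continuous_pdx hu)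
  have hsq := sq_l2norm_eq_neg_integral_fst_mul hα hβ hu hu₀
  rcases (l2norm_nonneg (Stadium α β) u).eq_or_lt with hN | hN
  · rw [← hN]
    have := l2norm_nonneg (Stadium α β) (pdx u)
    positivity
  · refine le_of_mul_le_mul_left ?_ hN
    linear_combination hsq + (neg_le_abs _).trans hcs

lemma two_mul_sq_l2norm_pdx_le (hα : 0 < α) (hβ : 0 < β) (hu : ContDiff ℝ 2 u)
    (hu₀ : ∀ p ∈ StadiumBoundary α β, u p = 0) (L : ℝ) :
    2 * l2norm (Stadium α β) (pdx u) ^ 2 ≤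
      bdryIntW α β (fun p n => p.1 * n.1 * nderiv u p n ^ 2) +
        (l2norm (Stadium α β) u + 2 * (α + β) * l2norm (Stadium α β) (pdx u)) *
          l2norm (Stadium α β) (fun p => lap u p - L * u p) := by
  have huc := hu.continuous
  have huxc := continuous_pdx (hu.of_le one_le_two)
  have hlap : ContDiff ℝ 0 (lap u) := contDiff_lap hu (by simp)
  have hlapc := hlap.continuous
  have hfc : Continuous fun p => lap u p - L * u p := by fun_prop
  have hI : ∀ {k : ℝ × ℝ → ℝ}, Continuous k → IntegrableOn k (Stadium α β) :=
    integrableOn_stadium hβ.le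
  have hweight : ∀ p ∈ Stadium α β, |2 * p.1| ≤ 2 * (α + β) := fun p hp =>
    abs_two_mul_fst_le_of_mem_stadium hα.le hβ.le hp
  have hu_f := abs_setIntegral_mul_le (isCompact_stadium (α := α) hβ.le) huc hfc
  have hux_f := abs_setIntegral_mul_mul_le (isCompact_stadium hβ.le) (by positivity) hweight
    huxc hfc
  have hsplit : ∫ p in Stadium α β, (2 * pdx u p ^ 2 -
      (u p + 2 * p.1 * pdx u p) * (lap u p - L * u p)) =
      2 * l2norm (Stadium α β) (pdx u) ^ 2 - (∫ p in Stadium α β, u p * (lap u p - L * u p)) -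
        ∫ p in Stadium α β, 2 * p.1 * (pdx u p * (lap u p - L * u p)) := by
    rw [sq_l2norm, ← integral_const_mul, ← integral_sub (hI (by fun_prop)) (hI (by fun_prop)),
      ← integral_sub (hI (by fun_prop)) (hI (by fun_prop))]
    congr! 2
    ring
  rw [← integral_commutator hα hβ hu hu₀ L, hsplit]
  linear_combination (le_abs_self _).trans hu_f + (le_abs_self _).trans hux_f

lemma l2norm_lap_le (hβ : 0 ≤ β) (hL : 0 ≤ L) (hu : ContDiff ℝ 2 u) :
    l2norm (Stadium α β) (lap u) ≤
      l2norm (Stadium α β) (fun p => lap u p - L * u p) + L * l2norm (Stadium α β) u := by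
  have huc := hu.continuous
  have hlap : ContDiff ℝ 0 (lap u) := contDiff_lap hu (by simp)
  have hlapc := hlap.continuous
  have htri := l2norm_add_le (isCompact_stadium (α := α) hβ)
    (g := fun p => lap u p - L * u p) (h := fun p => L * u p) (by fun_prop) (by fun_prop)
  rw [l2norm_const_mul, abs_of_nonneg hL] at htri
  simpa only [sub_add_cancel] using htri

lemma sq_l2norm_pdx_add_sq_l2norm_pdy_le (hα : 0 < α) (hβ : 0 ≤ β) (hu : ContDiff ℝ 2 u)
    (hu₀ : ∀ p ∈ StadiumBoundary α β, u p = 0) :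
    l2norm (Stadium α β) (pdx u) ^ 2 + l2norm (Stadium α β) (pdy u) ^ 2 ≤
      l2norm (Stadium α β) u * l2norm (Stadium α β) (lap u) := by
  have hlap : ContDiff ℝ 0 (lap u) := contDiff_lap hu (by simp)
  rw [sq_l2norm_pdx_add_sq_l2norm_pdy hα hβ hu hu₀]
  exact (le_abs_self _).trans
    (abs_setIntegral_mul_le (isCompact_stadium hβ) hu.continuous hlap.continuous)

end Control

section MainEstimate

variable {α β l : ℝ} {u : ℝ × ℝ → ℝ}

lemma l2norm_deriv_le_of_l2norm_residual_le (hα : 0 < α) (hβ : 0 < β) (hu : ContDiff ℝ 3 u)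
    (hu₀ : ∀ p ∈ StadiumBoundary α β, u p = 0) (hl : 0 ≤ l)
    (hf : l2norm (Stadium α β) (fun p => lap u p - l ^ 2 * u p) ≤
      l ^ 2 * l2norm (Stadium α β) u) :
    l2norm (Stadium α β) (pdx u) ≤ 2 * l * l2norm (Stadium α β) u ∧
      l2norm (Stadium α β) (pdy u) ≤ 2 * l * l2norm (Stadium α β) u ∧
      l2norm (Stadium α β) (pdx (pdy u)) ≤ l ^ 2 * l2norm (Stadium α β) u := by
  have hu₂ : ContDiff ℝ 2 u := hu.of_le (by norm_num)
  have hN := l2norm_nonneg (Stadium α β) u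
  have hlap : l2norm (Stadium α β) (lap u) ≤ 2 * l ^ 2 * l2norm (Stadium α β) u := by
    linear_combination l2norm_lap_le hβ.le (sq_nonneg l) hu₂ + hf
  have henergy : l2norm (Stadium α β) (pdx u) ^ 2 + l2norm (Stadium α β) (pdy u) ^ 2 ≤
      (2 * l * l2norm (Stadium α β) u) ^ 2 :=
    calc _ ≤ l2norm (Stadium α β) u * l2norm (Stadium α β) (lap u) :=
          sq_l2norm_pdx_add_sq_l2norm_pdy_le hα hβ.le hu₂ hu₀
      _ ≤ l2norm (Stadium α β) u * (2 * l ^ 2 * l2norm (Stadium α β) u) := by gcongr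
      _ ≤ (2 * l * l2norm (Stadium α β) u) ^ 2 := by
          linear_combination 2 * sq_nonneg (l * l2norm (Stadium α β) u)
  refine ⟨le_of_sq_le_sq ?_ (by positivity), le_of_sq_le_sq ?_ (by positivity), ?_⟩
  · exact (le_add_of_nonneg_right (sq_nonneg _)).trans henergy
  · exact (le_add_of_nonneg_left (sq_nonneg _)).trans henergy
  · linear_combination (two_mul_l2norm_pdx_pdy_le hα hβ hu hu₀ + hlap) / 2

lemma bdryIntW_le_of_l2norm_residual_le (hα : 0 < α) (hβ : 0 < β) (hu : ContDiff ℝ 3 u)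
    (hu₀ : ∀ p ∈ StadiumBoundary α β, u p = 0) (hl : 1 ≤ l)
    (hf : l2norm (Stadium α β) (fun p => lap u p - l ^ 2 * u p) ≤
      l ^ 2 * l2norm (Stadium α β) u) :
    bdryIntW α β (fun p n => p.1 * n.1 * nderiv u p n ^ 2) ≤
      4 * (α + β) * (3 + 3 * β + 4 * β ^ 2) / β ^ 2 * (l2norm (Stadium α β) u *
        (l ^ 2 * l2norm (Wings α β) u +
          l * l2norm (Stadium α β) (fun p => lap u p - l ^ 2 * u p))) := by
  have hflux := bdryIntW_fst_mul_fst_mul_sq_nderiv_le_l2norm hα.le hβ (sq_nonneg l)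
    (hu.of_le (by norm_num)) hu₀
  obtain ⟨hx, hy, hxy⟩ := l2norm_deriv_le_of_l2norm_residual_le hα hβ hu hu₀ (by linarith) hf
  have hwN : l2norm (Wings α β) u ≤ l2norm (Stadium α β) u :=
    l2norm_mono (isCompact_stadium hβ.le) hu.continuous subset_union_right
  have hw := l2norm_nonneg (Wings α β) u
  have hF := l2norm_nonneg (Stadium α β) fun p => lap u p - l ^ 2 * u p
  generalize l2norm (Wings α β) u = w at *
  generalize l2norm (Stadium α β) (fun p => lap u p - l ^ 2 * u p) = F at *
  generalize l2norm (Stadium α β) u = N at *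
  have hll : l ≤ l ^ 2 := le_self_pow₀ hl two_ne_zero
  have hN : 0 ≤ N := hw.trans hwN
  have hwing : 2 * l ^ 2 * β * w + 3 / 2 * l2norm (Stadium α β) (pdx u) +
      β * l2norm (Stadium α β) (pdx (pdy u)) ≤ (3 + 3 * β) * (l ^ 2 * N) :=
    calc _ ≤ 2 * l ^ 2 * β * N + 3 / 2 * (2 * l ^ 2 * N) + β * (l ^ 2 * N) := by
          gcongr; exact hx.trans (by gcongr)
      _ = (3 + 3 * β) * (l ^ 2 * N) := by ring
  have hres : 1 / 2 * β * w + β ^ 2 * (l2norm (Stadium α β) (pdx u) +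
      l2norm (Stadium α β) (pdy u)) ≤ (β + 4 * β ^ 2) * (l * N) :=
    calc _ ≤ 1 * β * (l * N) + β ^ 2 * (2 * l * N + 2 * l * N) := by
          gcongr
          · norm_num
          · exact hwN.trans (le_mul_of_one_le_left hN hl)
      _ = (β + 4 * β ^ 2) * (l * N) := by ring
  rw [div_mul_eq_mul_div, le_div_iff₀ (by positivity)]
  calc _ ≤ 4 * (α + β) * (w * ((3 + 3 * β) * (l ^ 2 * N)) + F * ((β + 4 * β ^ 2) * (l * N))) := by
        linear_combination 2 * hflux + 4 * (α + β) * (w * hwing + F * hres)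
    _ ≤ 4 * (α + β) * (3 + 3 * β + 4 * β ^ 2) * (N * (l ^ 2 * w + l * F)) := by
        have : 0 ≤ 4 * (α + β) * (4 * β ^ 2 * (l ^ 2 * w * N) + (3 + 2 * β) * (l * F * N)) := by
          positivity
        linear_combination this

/-- The constant in `l2norm_stadium_le`, the control estimate of the `L²` norm on the stadium by
the `L²` norms on the wings and of the residual. -/
def controlConst (α β : ℝ) : ℝ :=
  1 + 2 * (α + β) ^ 2 *
    (1 + 4 * (α + β) + 4 * (α + β) * (3 + 3 * β + 4 * β ^ 2) / β ^ 2)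

lemma one_le_controlConst (hα : 0 ≤ α) (hβ : 0 ≤ β) : 1 ≤ controlConst α β :=
  le_add_of_nonneg_right (by positivity)

lemma l2norm_stadium_le_of_l2norm_residual_le (hα : 0 < α) (hβ : 0 < β) (hu : ContDiff ℝ 3 u)
    (hu₀ : ∀ p ∈ StadiumBoundary α β, u p = 0) (hl : 1 ≤ l)
    (hf : l2norm (Stadium α β) (fun p => lap u p - l ^ 2 * u p) ≤
      l ^ 2 * l2norm (Stadium α β) u) :
    l2norm (Stadium α β) u ≤ (controlConst α β - 1) * (l ^ 2 * l2norm (Wings α β) u +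
      l * l2norm (Stadium α β) (fun p => lap u p - l ^ 2 * u p)) := by
  have hl₀ : 0 ≤ l := zero_le_one.trans hl
  have hu₂ : ContDiff ℝ 2 u := hu.of_le (by norm_num)
  rw [controlConst, add_sub_cancel_left]
  have hpoincare := l2norm_le_mul_l2norm_pdx hα hβ.le (hu.of_le (by norm_num)) hu₀
  have hcomm := two_mul_sq_l2norm_pdx_le hα hβ hu₂ hu₀ (l ^ 2)
  have hflux := bdryIntW_le_of_l2norm_residual_le hα hβ hu hu₀ hl hf
  have hx := (l2norm_deriv_le_of_l2norm_residual_le hα hβ hu hu₀ hl₀ hf).1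
  have hw := l2norm_nonneg (Wings α β) u
  have hF := l2norm_nonneg (Stadium α β) fun p => lap u p - l ^ 2 * u p
  have hN := l2norm_nonneg (Stadium α β) u
  have hX := l2norm_nonneg (Stadium α β) (pdx u)
  generalize l2norm (Wings α β) u = w at *
  generalize l2norm (Stadium α β) (fun p => lap u p - l ^ 2 * u p) = F at *
  generalize l2norm (Stadium α β) u = N at *
  generalize l2norm (Stadium α β) (pdx u) = X at *
  have hc : 0 ≤ 4 * (α + β) * (3 + 3 * β + 4 * β ^ 2) / β ^ 2 := by positivity
  generalize 4 * (α + β) * (3 + 3 * β + 4 * β ^ 2) / β ^ 2 = c at *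
  have hlF : l * F ≤ l ^ 2 * w + l * F := le_add_of_nonneg_left (by positivity)
  have hT : 0 ≤ l ^ 2 * w + l * F := by positivity
  generalize l ^ 2 * w + l * F = T at *
  have hFN : N * F ≤ N * T := by gcongr; exact (le_mul_of_one_le_left hF hl).trans hlF
  have hXF : X * F ≤ 2 * (N * T) :=
    calc X * F ≤ 2 * l * N * F := by gcongr
      _ = 2 * (N * (l * F)) := by ring
      _ ≤ 2 * (N * T) := by gcongr
  have hNN : N * N ≤ N * (2 * (α + β) ^ 2 * (1 + 4 * (α + β) + c) * T) :=
    calc N * N ≤ 2 * (α + β) * X * (2 * (α + β) * X) := by gcongr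
      _ = 2 * (α + β) ^ 2 * (2 * X ^ 2) := by ring
      _ ≤ 2 * (α + β) ^ 2 * (c * (N * T) + N * T + 2 * (α + β) * (2 * (N * T))) := by
        gcongr
        linear_combination hcomm + hflux + hFN + 2 * (α + β) * hXF
      _ = N * (2 * (α + β) ^ 2 * (1 + 4 * (α + β) + c) * T) := by ring
  rcases hN.eq_or_lt with rfl | hN
  · positivity
  · exact le_of_mul_le_mul_left hNN hN

theorem l2norm_stadium_le (hα : 0 < α) (hβ : 0 < β) (hu : ContDiff ℝ 3 u)
    (hu₀ : ∀ p ∈ StadiumBoundary α β, u p = 0) (hl : 1 ≤ l) :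
    l2norm (Stadium α β) u ≤ controlConst α β * (l ^ 2 * l2norm (Wings α β) u +
      l * l2norm (Stadium α β) (fun p => lap u p - l ^ 2 * u p)) := by
  have hK := one_le_controlConst hα.le hβ.le
  have hF := l2norm_nonneg (Stadium α β) fun p => lap u p - l ^ 2 * u p
  have hlF : l2norm (Stadium α β) (fun p => lap u p - l ^ 2 * u p) ≤
      l ^ 2 * l2norm (Wings α β) u +
        l * l2norm (Stadium α β) (fun p => lap u p - l ^ 2 * u p) :=
    (le_mul_of_one_le_left hF hl).trans
      (le_add_of_nonneg_left (mul_nonneg (sq_nonneg l) (l2norm_nonneg _ _)))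
  rcases le_total (l2norm (Stadium α β) fun p => lap u p - l ^ 2 * u p)
    (l ^ 2 * l2norm (Stadium α β) u) with hf | hf
  · exact (l2norm_stadium_le_of_l2norm_residual_le hα hβ hu hu₀ hl hf).trans
      (mul_le_mul_of_nonneg_right (sub_le_self _ zero_le_one) (hF.trans hlF))
  · calc l2norm (Stadium α β) u ≤ l ^ 2 * l2norm (Stadium α β) u :=
          le_mul_of_one_le_left (l2norm_nonneg _ _) (one_le_pow₀ hl)
      _ ≤ _ := hf.trans (hlF.trans (le_mul_of_one_le_left (hF.trans hlF) hK))

end MainEstimate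

section Datum

variable {α β : ℝ}

theorem exists_contDiff_eventuallyEq_nhds {E F : Type*} [NormedAddCommGroup E] [NormedSpace ℝ E]
    [FiniteDimensional ℝ E] [NormedAddCommGroup F] [NormedSpace ℝ F] {n : ℕ∞} {K V : Set E}
    {u : E → F} (hK : IsCompact K) (hV : IsOpen V) (hKV : K ⊆ V) (hu : ContDiffOn ℝ n u V) :
    ∃ v : E → F, ContDiff ℝ n v ∧ ∀ p ∈ K, v =ᶠ[nhds p] u := by
  obtain ⟨K', hK', hKK', hK'V⟩ := exists_compact_between hK hV hKV
  obtain ⟨χ, hχ₁, hχ₀, -⟩ := exists_contMDiffMap_one_nhds_of_subset_interior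
    (modelWithCornersSelf ℝ E) (n := n) hK.isClosed hKK'
  have hχ : ContDiff ℝ n χ := contMDiff_iff_contDiff.1 χ.contMDiff
  refine ⟨fun p => χ p • u p, contDiff_iff_contDiffAt.2 fun p => ?_, fun p hp => ?_⟩
  · by_cases hp : p ∈ V
    · exact hχ.contDiffAt.smul (hu.contDiffAt (hV.mem_nhds hp))
    · refine (contDiffAt_const (c := (0 : F))).congr_of_eventuallyEq ?_
      filter_upwards [hK'.isClosed.isOpen_compl.mem_nhds fun h => hp (hK'V h)] with q hq
      rw [hχ₀ q hq, zero_smul]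
  · filter_upwards [eventually_nhdsSet_iff_forall.1 hχ₁ p hp] with q hq
    rw [hq, one_smul]

theorem QMDatum.l2norm_u_le (hα : 0 < α) (hβ : 0 < β) (d : QMDatum α β)
    (hlam : 1 ≤ d.lam) :
    l2norm (Stadium α β) d.u ≤ controlConst α β *
      (d.lam ^ 2 * l2norm (Wings α β) d.u + d.lam * l2norm (Stadium α β) d.f) := by
  have hS := isCompact_stadium (α := α) hβ.le
  obtain ⟨V, hV, hSV, hu⟩ := d.smooth
  obtain ⟨v, hv, hvu⟩ := exists_contDiff_eventuallyEq_nhds hS hV hSV hu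
  have hvu' : EqOn v d.u (Stadium α β) := fun p hp => (hvu p hp).eq_of_nhds
  have hf : EqOn (fun p => lap v p - d.lam ^ 2 * v p) d.f (Stadium α β) := fun p hp => by
    simp only [lap_eq_of_eventuallyEq (hvu p hp), hvu' hp, d.eqn p hp]
  have hv₀ : ∀ p ∈ StadiumBoundary α β, v p = 0 := fun p hp =>
    (hvu' (stadiumBoundary_subset_stadium hβ.le hp)).trans (d.dirichlet p hp)
  rw [← l2norm_congr hS.measurableSet hvu', ← l2norm_congr hS.measurableSet hf,
    ← l2norm_congr (isCompact_wings hβ.le).measurableSet (hvu'.mono subset_union_right)]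
  exact l2norm_stadium_le hα hβ (contDiff_infty.1 hv 3) hv₀ hlam

end Datum

lemma tendsto_mul_zero_of_tendsto_sq_mul_zero {ι : Type*} {F : Filter ι} {l f : ι → ℝ}
    (hl : Tendsto l F atTop) (hf : Tendsto (fun k => l k ^ 2 * f k) F (nhds 0)) :
    Tendsto (fun k => l k * f k) F (nhds 0) := by
  have := hl.inv_tendsto_atTop.mul hf
  rw [mul_zero] at this
  refine this.congr' ?_
  filter_upwards [hl.eventually_ne_atTop 0] with k hk
  simp only [Pi.inv_apply]
  field_simp

theorem stmt5_general (α β : ℝ) (hα : 0 < α) (hβ : 0 < β) :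
    ∃ C > 0, ∀ d : ℕ → QMDatum α β,
      (∀ k, (∫ p in Stadium α β, ((d k).u p) ^ 2) = 1) →
      Tendsto (fun k => (d k).lam) atTop atTop →
      Tendsto (fun k => (d k).lam *
        Real.sqrt (∫ p in Stadium α β, ((d k).f p) ^ 2)) atTop (nhds 0) →
      ∀ᶠ k in atTop,
        Real.sqrt (∫ p in Wings α β, ((d k).u p) ^ 2) ≥ C / (d k).lam ^ 2 := by
  have hK : 0 < controlConst α β := zero_lt_one.trans_le (one_le_controlConst hα.le hβ.le)
  have hC : 0 < 1 / (2 * controlConst α β) := by positivity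
  refine ⟨1 / (2 * controlConst α β), hC, fun d hu hlam hf => ?_⟩
  filter_upwards [hlam.eventually_ge_atTop 1, hf.eventually_lt_const hC] with k hk hfk
  change (d k).lam * l2norm (Stadium α β) (d k).f < _ at hfk
  change l2norm (Wings α β) (d k).u ≥ _
  have hu₁ : l2norm (Stadium α β) (d k).u = 1 := by rw [l2norm, hu k, sqrt_one]
  have control := (d k).l2norm_u_le hα hβ hk
  rw [hu₁] at control
  have hhalf : controlConst α β * ((d k).lam * l2norm (Stadium α β) (d k).f) ≤ 1 / 2 := by
    refine (mul_le_mul_of_nonneg_left hfk.le hK.le).trans_eq ?_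
    field_simp
  rw [ge_iff_le, div_div, div_le_iff₀' (by have := (d k).lam_pos; positivity)]
  linear_combination 2 * control + 2 * hhalf

/-- There is `C > 0` depending only on `α, β` such that for every sequence of
real Dirichlet quasimode data with `‖u_k‖_{L²(S)} = 1`, `λ_k → ∞` and
`λ_k² ‖f_k‖_{L²(S)} → 0` (an `o(λ⁻²)` quasimode, e.g. eigenfunctions), one has
`‖u_k‖_{L²(W)} ≥ C λ_k⁻²` for all large `k`. -/
theorem stmt5 (α β : ℝ) (hα : 0 < α) (hβ : 0 < β) :
    ∃ C > 0, ∀ d : ℕ → QMDatum α β,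
      (∀ k, (∫ p in Stadium α β, ((d k).u p) ^ 2) = 1) →
      Tendsto (fun k => (d k).lam) atTop atTop →
      Tendsto (fun k => (d k).lam ^ 2 *
        Real.sqrt (∫ p in Stadium α β, ((d k).f p) ^ 2)) atTop (nhds 0) →
      ∀ᶠ k in atTop,
        Real.sqrt (∫ p in Wings α β, ((d k).u p) ^ 2) ≥ C / (d k).lam ^ 2 := by
  obtain ⟨C, hC, h⟩ := stmt5_general α β hα hβ
  exact ⟨C, hC, fun d hu hl hf => h d hu hl (tendsto_mul_zero_of_tendsto_sq_mul_zero hl hf)⟩
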